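/- arXiv:2001.02055 — 5 statements merged into one kernel-verified Lean document; each statement's English description precedes it below -/
import Mathlib

section
/- Let D and N be positive integers and let (φ_n)_{n=1}^N be unit vectors in a D-dimensional complex inner product space H. Then ∑_{n=1}^N ∑_{n'=1}^N |⟨φ_n, φ_{n'}⟩|² ≥ N²/D, and equality holds if and only if (φ_n)_{n=1}^N is a tight frame for H, i.e. ∑_{n=1}^N ⟨φ_n, y⟩ φ_n = (N/D)·y for every y ∈ H. -/
open scoped BigOperators

/-!
The frame operator `S` of `φ` has trace `∑ₙ ‖φ n‖²`, and its squared Hilbert–Schmidt norm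
`tr (S† S)` is the frame potential `∑ₙ ∑ₙ' |⟨φ n, φ n'⟩|²`. The bound is then the Cauchy–Schwarz
inequality for `S` and the identity: the difference between the two sides is the squared
Hilbert–Schmidt distance from `S` to the multiple of the identity with the same trace.
-/

open LinearMap InnerProductSpace Module

section HilbertSchmidt

variable {𝕜 E F : Type*} [RCLike 𝕜]
  [NormedAddCommGroup E] [InnerProductSpace 𝕜 E] [FiniteDimensional 𝕜 E]
  [NormedAddCommGroup F] [InnerProductSpace 𝕜 F] [FiniteDimensional 𝕜 F]

theorem trace_adjoint_comp_self {ι : Type*} [Fintype ι] (T : E →ₗ[𝕜] F)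
    (b : OrthonormalBasis ι 𝕜 E) :
    trace 𝕜 E (adjoint T ∘ₗ T) = ((∑ i, ‖T (b i)‖ ^ 2 : ℝ) : 𝕜) := by
  simp [trace_eq_sum_inner _ b, adjoint_inner_right, inner_self_eq_norm_sq_to_K]

theorem re_trace_adjoint_comp_self_nonneg (T : E →ₗ[𝕜] F) :
    0 ≤ RCLike.re (trace 𝕜 E (adjoint T ∘ₗ T)) := by
  rw [trace_adjoint_comp_self T (stdOrthonormalBasis 𝕜 E), RCLike.ofReal_re]
  positivity

theorem re_trace_adjoint_comp_self_eq_zero_iff {T : E →ₗ[𝕜] F} :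
    RCLike.re (trace 𝕜 E (adjoint T ∘ₗ T)) = 0 ↔ T = 0 := by
  refine ⟨fun h ↦ (stdOrthonormalBasis 𝕜 E).toBasis.ext fun i ↦ ?_, fun h ↦ by simp [h]⟩
  rw [trace_adjoint_comp_self T (stdOrthonormalBasis 𝕜 E), RCLike.ofReal_re,
    Finset.sum_eq_zero_iff_of_nonneg fun _ _ ↦ by positivity] at h
  simpa using h i (Finset.mem_univ i)

theorem trace_adjoint (T : E →ₗ[𝕜] E) :
    trace 𝕜 E (adjoint T) = starRingEnd 𝕜 (trace 𝕜 E T) := by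
  simp [trace_eq_sum_inner _ (stdOrthonormalBasis 𝕜 E), adjoint_inner_right]

theorem trace_adjoint_comp_self_sub_smul_id (T : E →ₗ[𝕜] E) (c : 𝕜) :
    trace 𝕜 E (adjoint (T - c • LinearMap.id) ∘ₗ (T - c • LinearMap.id)) =
      trace 𝕜 E (adjoint T ∘ₗ T) - c * starRingEnd 𝕜 (trace 𝕜 E T)
        - starRingEnd 𝕜 c * trace 𝕜 E T + starRingEnd 𝕜 c * c * finrank 𝕜 E := by
  simp only [map_sub, map_smulₛₗ, RingHom.id_apply, adjoint_id, comp_sub, sub_comp, comp_smul,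
    smul_comp, comp_id, id_comp, trace_id, trace_adjoint, smul_eq_mul]
  ring

theorem re_trace_adjoint_comp_self_sub_trace_div_finrank_smul_id [Nontrivial E]
    (T : E →ₗ[𝕜] E) :
    RCLike.re (trace 𝕜 E (adjoint (T - (trace 𝕜 E T / finrank 𝕜 E) • LinearMap.id) ∘ₗ
        (T - (trace 𝕜 E T / finrank 𝕜 E) • LinearMap.id))) =
      RCLike.re (trace 𝕜 E (adjoint T ∘ₗ T)) - ‖trace 𝕜 E T‖ ^ 2 / finrank 𝕜 E := by
  have h_dim : (finrank 𝕜 E : 𝕜) ≠ 0 := Nat.cast_ne_zero.2 finrank_pos.ne'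
  have h_cast : ((‖trace 𝕜 E T‖ ^ 2 / finrank 𝕜 E : ℝ) : 𝕜) =
      trace 𝕜 E T * starRingEnd 𝕜 (trace 𝕜 E T) / finrank 𝕜 E := by
    simp [RCLike.mul_conj]
  rw [← RCLike.ofReal_re (K := 𝕜) (‖trace 𝕜 E T‖ ^ 2 / finrank 𝕜 E), ← map_sub, h_cast,
    trace_adjoint_comp_self_sub_smul_id, map_div₀, map_natCast]
  congr 1
  field_simp
  ring

theorem norm_trace_sq_div_finrank_le [Nontrivial E] (T : E →ₗ[𝕜] E) :
    ‖trace 𝕜 E T‖ ^ 2 / finrank 𝕜 E ≤ RCLike.re (trace 𝕜 E (adjoint T ∘ₗ T)) := by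
  rw [← sub_nonneg, ← re_trace_adjoint_comp_self_sub_trace_div_finrank_smul_id]
  exact re_trace_adjoint_comp_self_nonneg _

theorem re_trace_adjoint_comp_self_eq_iff [Nontrivial E] {T : E →ₗ[𝕜] E} :
    RCLike.re (trace 𝕜 E (adjoint T ∘ₗ T)) = ‖trace 𝕜 E T‖ ^ 2 / finrank 𝕜 E ↔
      T = (trace 𝕜 E T / finrank 𝕜 E) • LinearMap.id := by
  rw [← sub_eq_zero, ← re_trace_adjoint_comp_self_sub_trace_div_finrank_smul_id,
    re_trace_adjoint_comp_self_eq_zero_iff, sub_eq_zero]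

end HilbertSchmidt

section Frame

variable (𝕜 : Type*) {E ι : Type*} [RCLike 𝕜] [NormedAddCommGroup E] [InnerProductSpace 𝕜 E]
  [Fintype ι]

/-- The frame operator `y ↦ ∑ₙ ⟨φ n, y⟩ φ n` of a finite family `φ`, which is a tight frame
exactly when this operator is a positive multiple of the identity. -/
noncomputable def frameOperator (φ : ι → E) : E →ₗ[𝕜] E :=
  ∑ n, (rankOne 𝕜 (φ n) (φ n)).toLinearMap

/-- The frame potential of a finite family `φ` (Benedetto–Fickus): the sum of the squared moduli
of the entries of its Gram matrix, diagonal included. -/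
noncomputable def framePotential (φ : ι → E) : ℝ :=
  ∑ n, ∑ n', ‖inner 𝕜 (φ n) (φ n')‖ ^ 2

theorem frameOperator_apply (φ : ι → E) (y : E) :
    frameOperator 𝕜 φ y = ∑ n, inner 𝕜 (φ n) y • φ n := by
  simp [frameOperator]

theorem isSymmetric_frameOperator (φ : ι → E) : (frameOperator 𝕜 φ).IsSymmetric :=
  isSymmetric_sum _ fun n _ ↦ isSymmetric_rankOne_self (φ n)

variable [FiniteDimensional 𝕜 E]

theorem trace_frameOperator (φ : ι → E) :
    trace 𝕜 E (frameOperator 𝕜 φ) = ((∑ n, ‖φ n‖ ^ 2 : ℝ) : 𝕜) := by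
  simp [frameOperator, trace_rankOne, inner_self_eq_norm_sq_to_K]

variable {𝕜} in
theorem trace_comp_frameOperator (T : E →ₗ[𝕜] E) (φ : ι → E) :
    trace 𝕜 E (T ∘ₗ frameOperator 𝕜 φ) = ∑ n, inner 𝕜 (φ n) (T (φ n)) := by
  have h_comp : T ∘ₗ frameOperator 𝕜 φ =
      ∑ n, (rankOne 𝕜 (T (φ n)) (φ n)).toLinearMap := by
    ext y
    simp [frameOperator_apply]
  simp [h_comp, trace_rankOne]

theorem trace_adjoint_comp_frameOperator (φ : ι → E) :
    trace 𝕜 E (adjoint (frameOperator 𝕜 φ) ∘ₗ frameOperator 𝕜 φ) = (framePotential 𝕜 φ : 𝕜) := by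
  have h_norm (x y : E) : inner 𝕜 y x * inner 𝕜 x y = (‖inner 𝕜 x y‖ : 𝕜) ^ 2 := by
    rw [← inner_conj_symm y x, RCLike.conj_mul]
  rw [(isSymmetric_frameOperator 𝕜 φ).adjoint_eq, trace_comp_frameOperator]
  simp [frameOperator_apply, framePotential, inner_sum, inner_smul_right, h_norm]

theorem stmt0_general [Nontrivial E] (φ : ι → E) :
    (∑ n, ‖φ n‖ ^ 2) ^ 2 / finrank 𝕜 E ≤ framePotential 𝕜 φ ∧
      (framePotential 𝕜 φ = (∑ n, ‖φ n‖ ^ 2) ^ 2 / finrank 𝕜 E ↔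
        frameOperator 𝕜 φ =
          (((∑ n, ‖φ n‖ ^ 2 : ℝ) : 𝕜) / finrank 𝕜 E) • LinearMap.id) := by
  have h_le := norm_trace_sq_div_finrank_le (frameOperator 𝕜 φ)
  have h_eq := re_trace_adjoint_comp_self_eq_iff (T := frameOperator 𝕜 φ)
  rw [trace_adjoint_comp_frameOperator, trace_frameOperator, RCLike.ofReal_re,
    RCLike.norm_ofReal, sq_abs] at h_le h_eq
  exact ⟨h_le, h_eq⟩

end Frame

/-- For unit vectors `φ 1, …, φ N` in a `D`-dimensional complex inner product
space `H`, one has `∑ₙ ∑ₙ' |⟨φ n, φ n'⟩|² ≥ N²/D`, with equality if and only if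
`(φ n)` is a tight frame for `H`, i.e. `∑ₙ ⟨φ n, y⟩ • φ n = (N/D) • y` for all `y`. -/
theorem stmt0 {H : Type*} [NormedAddCommGroup H] [InnerProductSpace ℂ H]
    [FiniteDimensional ℂ H] (D N : ℕ) (hD : 0 < D) (hN : 0 < N)
    (hdim : Module.finrank ℂ H = D)
    (φ : Fin N → H) (hunit : ∀ n, ‖φ n‖ = 1) :
    (N : ℝ) ^ 2 / (D : ℝ) ≤ ∑ n, ∑ n', ‖(inner ℂ (φ n) (φ n') : ℂ)‖ ^ 2 ∧
    ((∑ n, ∑ n', ‖(inner ℂ (φ n) (φ n') : ℂ)‖ ^ 2 = (N : ℝ) ^ 2 / (D : ℝ)) ↔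
      ∀ y : H, ∑ n, (inner ℂ (φ n) y : ℂ) • φ n = ((N : ℂ) / (D : ℂ)) • y) := by
  have : Nontrivial H := nontrivial_of_finrank_pos (hdim ▸ hD)
  simpa [framePotential, LinearMap.ext_iff, frameOperator_apply, hunit, hdim] using
    stmt0_general ℂ φ
end

section
/- Let D < N be positive integers with N ≥ 2 and let (φ_n)_{n=1}^N be an ETF(D,N) in a D-dimensional complex inner product space. Then there exists a family (φ̃_n)_{n=1}^N of unit vectors in an (N−D)-dimensional complex inner product space which is an ETF(N−D, N) and satisfies ⟨φ̃_n, φ̃_{n'}⟩ = −(D/(N−D))·⟨φ_n, φ_{n'}⟩ for all n ≠ n' (a Naimark complement of (φ_n)). -/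
open scoped BigOperators

/-- A family `(φ n)` of `N` vectors in a complex inner product space is an
equiangular tight frame `ETF(D,N)`: unit vectors, `|⟨φ n, φ n'⟩|² = (N−D)/(D(N−1))`
for `n ≠ n'`, and frame operator equal to `(N/D)·Id`. -/
def IsETF {ι E : Type*} [Fintype ι] [NormedAddCommGroup E] [InnerProductSpace ℂ E]
    (D N : ℕ) (φ : ι → E) : Prop :=
  (∀ n, ‖φ n‖ = 1) ∧
  (∀ n n', n ≠ n' →
    ‖(inner ℂ (φ n) (φ n') : ℂ)‖ ^ 2 = ((N : ℝ) - D) / (D * ((N : ℝ) - 1))) ∧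
  (∀ y : E, ∑ n, (inner ℂ (φ n) y : ℂ) • φ n = ((N : ℂ) / (D : ℂ)) • y)

/-!
The analysis operator `y ↦ (⟪φ n, y⟫)ₙ` of a tight frame `φ` is a multiple of an isometric embedding
into `ℂᴺ`, and the standard basis of `ℂᴺ` projects onto its range as a multiple of the frame. The
projections of the standard basis onto the orthogonal complement of the range again form a tight
frame, with Gram matrix `I - a⁻¹ G`, where `a` is the frame constant and `G` the Gram matrix of `φ`.
After rescaling to unit norm its off-diagonal Gram entries are `-D / (N - D)` times those of `φ`, so
equiangularity is inherited.
-/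

section TightFrame

open Module Submodule

variable {ι 𝕜 E F : Type*} [RCLike 𝕜]
  [NormedAddCommGroup E] [InnerProductSpace 𝕜 E] [NormedAddCommGroup F] [InnerProductSpace 𝕜 F]

variable (𝕜) in
/-- The analysis operator `y ↦ (⟪φ n, y⟫)ₙ` of a finite family of vectors. -/
def analysisOperator (φ : ι → E) : E →ₗ[𝕜] EuclideanSpace 𝕜 ι :=
  (WithLp.linearEquiv 2 𝕜 (ι → 𝕜)).symm ∘ₗ LinearMap.pi fun n => innerₛₗ 𝕜 (φ n)

@[simp]
theorem analysisOperator_apply (φ : ι → E) (y : E) (n : ι) :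
    analysisOperator 𝕜 φ y n = inner 𝕜 (φ n) y :=
  rfl

variable [Fintype ι]

variable (𝕜) in
/-- A finite family of vectors is a tight frame with frame constant `a` if its frame operator
`y ↦ ∑ n, ⟪φ n, y⟫ • φ n` is `a` times the identity. Positivity of `a` is not part of the
definition. -/
def IsTightFrame (a : ℝ) (φ : ι → E) : Prop :=
  ∀ y, ∑ n, inner 𝕜 (φ n) y • φ n = (a : 𝕜) • y

namespace IsTightFrame

theorem smul {a : ℝ} {φ : ι → E} (hφ : IsTightFrame 𝕜 a φ) (c : 𝕜) :
    IsTightFrame 𝕜 (‖c‖ ^ 2 * a) fun n => c • φ n := by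
  intro y
  calc ∑ n, inner 𝕜 (c • φ n) y • c • φ n
      = ((starRingEnd 𝕜) c * c) • ∑ n, inner 𝕜 (φ n) y • φ n := by
        simp only [Finset.smul_sum, inner_smul_left, smul_smul, mul_right_comm]
    _ = ((‖c‖ ^ 2 * a : ℝ) : 𝕜) • y := by
        rw [hφ y, smul_smul, RCLike.conj_mul, RCLike.ofReal_mul, RCLike.ofReal_pow]

theorem map {a : ℝ} {φ : ι → E} (hφ : IsTightFrame 𝕜 a φ) (U : E ≃ₗᵢ[𝕜] F) :
    IsTightFrame 𝕜 a fun n => U (φ n) := by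
  intro y
  obtain ⟨x, rfl⟩ := U.surjective y
  simp only [LinearIsometryEquiv.inner_map_map, ← map_smul, ← map_sum, hφ x]

end IsTightFrame

theorem isTightFrame_one_orthogonalProjectionOnto (b : OrthonormalBasis ι 𝕜 E)
    (K : Submodule 𝕜 E) [K.HasOrthogonalProjection] :
    IsTightFrame 𝕜 1 fun n => K.orthogonalProjectionOnto (b n) := by
  intro y
  calc ∑ n, inner 𝕜 (K.orthogonalProjectionOnto (b n)) y • K.orthogonalProjectionOnto (b n)
      = K.orthogonalProjectionOnto (∑ n, inner 𝕜 (b n) (y : E) • b n) := by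
        simp only [map_sum, map_smul, inner_orthogonalProjectionOnto_eq_of_mem_right]
    _ = ((1 : ℝ) : 𝕜) • y := by
        rw [b.sum_repr', orthogonalProjectionOnto_mem_subspace_eq_self, RCLike.ofReal_one, one_smul]

variable (𝕜) in
/-- The canonical Naimark complement of a finite family `φ`: the orthogonal projections of the
standard basis vectors onto the orthogonal complement of the range of the analysis operator. It is
not rescaled to unit norm. -/
noncomputable def naimarkComplement (φ : ι → E) (n : ι) : (analysisOperator 𝕜 φ).rangeᗮ :=
  (analysisOperator 𝕜 φ).rangeᗮ.orthogonalProjectionOnto (EuclideanSpace.basisFun ι 𝕜 n)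

theorem isTightFrame_one_naimarkComplement (φ : ι → E) :
    IsTightFrame 𝕜 1 (naimarkComplement 𝕜 φ) :=
  isTightFrame_one_orthogonalProjectionOnto _ _

namespace IsTightFrame

variable {a : ℝ} {φ : ι → E}

theorem inner_analysisOperator (hφ : IsTightFrame 𝕜 a φ) (y z : E) :
    inner 𝕜 (analysisOperator 𝕜 φ y) (analysisOperator 𝕜 φ z) = a * inner 𝕜 y z := by
  calc inner 𝕜 (analysisOperator 𝕜 φ y) (analysisOperator 𝕜 φ z)
      = inner 𝕜 y (∑ n, inner 𝕜 (φ n) z • φ n) := by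
        simp only [PiLp.inner_apply, analysisOperator_apply, RCLike.inner_apply, inner_conj_symm,
          inner_sum, inner_smul_right]
    _ = a * inner 𝕜 y z := by rw [hφ z, inner_smul_right]

theorem analysisOperator_injective (hφ : IsTightFrame 𝕜 a φ) (ha : a ≠ 0) :
    Function.Injective (analysisOperator 𝕜 φ) := by
  refine (injective_iff_map_eq_zero _).2 fun y hy => ?_
  have h : (a : 𝕜) * inner 𝕜 y y = 0 := by
    rw [← hφ.inner_analysisOperator, hy, inner_zero_left]
  simpa [ha] using h

theorem finrank_orthogonal_range_analysisOperator (hφ : IsTightFrame 𝕜 a φ) (ha : a ≠ 0) :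
    finrank 𝕜 E + finrank 𝕜 (analysisOperator 𝕜 φ).rangeᗮ = Fintype.card ι := by
  rw [← LinearMap.finrank_range_of_inj (hφ.analysisOperator_injective ha),
    finrank_add_finrank_orthogonal, finrank_euclideanSpace]

theorem starProjection_range_analysisOperator (hφ : IsTightFrame 𝕜 a φ) (ha : a ≠ 0) (n : ι) :
    (analysisOperator 𝕜 φ).range.starProjection (EuclideanSpace.basisFun ι 𝕜 n) =
      (a : 𝕜)⁻¹ • analysisOperator 𝕜 φ (φ n) := by
  classical
  refine eq_starProjection_of_mem_of_inner_eq_zero (smul_mem _ _ ⟨φ n, rfl⟩) ?_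
  rintro _ ⟨y, rfl⟩
  have hbasis : inner 𝕜 (EuclideanSpace.basisFun ι 𝕜 n) (analysisOperator 𝕜 φ y) =
      inner 𝕜 (φ n) y := by
    simp [EuclideanSpace.inner_single_left]
  have hframe : inner 𝕜 ((a : 𝕜)⁻¹ • analysisOperator 𝕜 φ (φ n)) (analysisOperator 𝕜 φ y) =
      inner 𝕜 (φ n) y := by
    simp [inner_smul_left, hφ.inner_analysisOperator, ha]
  rw [inner_sub_left, hbasis, hframe, sub_self]

theorem inner_naimarkComplement [DecidableEq ι] (hφ : IsTightFrame 𝕜 a φ) (ha : a ≠ 0) (n m : ι) :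
    inner 𝕜 (naimarkComplement 𝕜 φ n) (naimarkComplement 𝕜 φ m) =
      (if n = m then 1 else 0) - (a : 𝕜)⁻¹ * inner 𝕜 (φ n) (φ m) := by
  have hm : (naimarkComplement 𝕜 φ m : EuclideanSpace 𝕜 ι) =
      EuclideanSpace.basisFun ι 𝕜 m - (a : 𝕜)⁻¹ • analysisOperator 𝕜 φ (φ m) := by
    rw [← hφ.starProjection_range_analysisOperator ha, ← starProjection_orthogonal_val]
    rfl
  calc inner 𝕜 (naimarkComplement 𝕜 φ n) (naimarkComplement 𝕜 φ m)
      = inner 𝕜 (EuclideanSpace.basisFun ι 𝕜 n) (naimarkComplement 𝕜 φ m : EuclideanSpace 𝕜 ι) :=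
        inner_orthogonalProjectionOnto_eq_of_mem_right _ _
    _ = (if n = m then 1 else 0) - (a : 𝕜)⁻¹ * inner 𝕜 (φ n) (φ m) := by
        rw [hm]
        simp [inner_sub_right, inner_smul_right, EuclideanSpace.inner_single_left]

theorem exists_naimarkComplement [DecidableEq ι] [FiniteDimensional 𝕜 F]
    (hφ : IsTightFrame 𝕜 a φ) (ha : a ≠ 0)
    (hdim : finrank 𝕜 E + finrank 𝕜 F = Fintype.card ι) {b : ℝ} (hb : 0 ≤ b) :
    ∃ ψ : ι → F, IsTightFrame 𝕜 b ψ ∧ ∀ n m,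
      inner 𝕜 (ψ n) (ψ m) = b * ((if n = m then 1 else 0) - (a : 𝕜)⁻¹ * inner 𝕜 (φ n) (φ m)) := by
  have hfinrank : finrank 𝕜 (analysisOperator 𝕜 φ).rangeᗮ = finrank 𝕜 F :=
    Nat.add_left_cancel ((hφ.finrank_orthogonal_range_analysisOperator ha).trans hdim.symm)
  let U : (analysisOperator 𝕜 φ).rangeᗮ ≃ₗᵢ[𝕜] F :=
    (stdOrthonormalBasis 𝕜 _).equiv (stdOrthonormalBasis 𝕜 F) (finCongr hfinrank)
  have hsqrt : ‖(√b : 𝕜)‖ ^ 2 = b := by rw [RCLike.norm_ofReal, sq_abs, Real.sq_sqrt hb]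
  refine ⟨fun n => (√b : 𝕜) • U (naimarkComplement 𝕜 φ n), ?_, fun n m => ?_⟩
  · simpa only [hsqrt, mul_one] using
      ((isTightFrame_one_naimarkComplement φ).map U).smul (√b : 𝕜)
  · rw [inner_smul_left, inner_smul_right, U.inner_map_map, hφ.inner_naimarkComplement ha,
      ← mul_assoc, RCLike.conj_mul, ← RCLike.ofReal_pow, hsqrt]

end IsTightFrame

end TightFrame

section ETF

open Module

variable {ι E F : Type*} [Fintype ι] [NormedAddCommGroup E] [InnerProductSpace ℂ E]
  [NormedAddCommGroup F] [InnerProductSpace ℂ F] {D N : ℕ} {φ : ι → E}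

namespace IsETF

theorem isTightFrame (hφ : IsETF D N φ) : IsTightFrame ℂ (N / D : ℝ) φ := by
  intro y
  simpa using hφ.2.2 y

theorem norm_inner_sq_of_inner_eq (hφ : IsETF D N φ) (hDN : D ≤ N) {n m : ι} (hnm : n ≠ m)
    {x y : F} (hxy : inner ℂ x y = -((D : ℂ) / ((N : ℂ) - D)) * inner ℂ (φ n) (φ m)) :
    ‖inner ℂ x y‖ ^ 2 = ((N : ℝ) - (N - D : ℕ)) / ((N - D : ℕ) * ((N : ℝ) - 1)) := by
  have hratio : ‖(D : ℂ) / ((N : ℂ) - D)‖ = (D : ℝ) / (N - D : ℕ) := by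
    rw [← Nat.cast_sub hDN, norm_div, Complex.norm_natCast, Complex.norm_natCast]
  rw [hxy, norm_mul, norm_neg, hratio, mul_pow, hφ.2.1 n m hnm, Nat.cast_sub hDN]
  field_simp
  ring

end IsETF

theorem stmt1_general (hcard : Fintype.card ι = N) (hD : 0 < D) (hDN : D < N)
    (hE : finrank ℂ E = D) (hF : finrank ℂ F = N - D) (hφ : IsETF D N φ) :
    ∃ ψ : ι → F, IsETF (N - D) N ψ ∧ ∀ n m, n ≠ m →
      inner ℂ (ψ n) (ψ m) = -((D : ℂ) / ((N : ℂ) - (D : ℂ))) * inner ℂ (φ n) (φ m) := by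
  classical
  have : FiniteDimensional ℂ F := .of_finrank_pos (by lia)
  have hN : 0 < N := hD.trans hDN
  obtain ⟨ψ, hψ, hgram⟩ := hφ.isTightFrame.exists_naimarkComplement (F := F) (by positivity)
    (by lia) (b := N / (N - D : ℕ)) (by positivity)
  have hN₀ : (N : ℂ) ≠ 0 := by exact_mod_cast hN.ne'
  have hND : (N : ℂ) - D ≠ 0 := sub_ne_zero.2 (by exact_mod_cast hDN.ne')
  have hoff : ∀ n m, n ≠ m →
      inner ℂ (ψ n) (ψ m) = -((D : ℂ) / ((N : ℂ) - D)) * inner ℂ (φ n) (φ m) := by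
    intro n m hnm
    rw [hgram, if_neg hnm]
    push_cast [hDN.le]
    field_simp
    ring
  have hself : ∀ n, inner ℂ (ψ n) (ψ n) = 1 := by
    intro n
    rw [hgram, if_pos rfl, inner_self_eq_one_of_norm_eq_one (hφ.1 n)]
    push_cast [hDN.le]
    field_simp
  refine ⟨ψ, ⟨fun n => ?_, fun n m hnm => ?_, fun y => ?_⟩, hoff⟩
  · rw [norm_eq_sqrt_re_inner (𝕜 := ℂ), hself, RCLike.one_re, Real.sqrt_one]
  · exact hφ.norm_inner_sq_of_inner_eq hDN.le hnm (hoff n m hnm)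
  · simpa using hψ y

end ETF

/-- every `ETF(D,N)` with `D < N` admits a Naimark complement:
an `ETF(N−D, N)` `(φ̃ n)` in an `(N−D)`-dimensional space with
`⟨φ̃ n, φ̃ n'⟩ = −(D/(N−D))·⟨φ n, φ n'⟩` for `n ≠ n'`. -/
theorem stmt1 {H : Type*} [NormedAddCommGroup H] [InnerProductSpace ℂ H]
    [FiniteDimensional ℂ H] (D N : ℕ) (hD : 0 < D) (hDN : D < N) (hN : 2 ≤ N)
    (hdim : Module.finrank ℂ H = D)
    (φ : Fin N → H) (hETF : IsETF D N φ) :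
    ∃ ψ : Fin N → EuclideanSpace ℂ (Fin (N - D)),
      IsETF (N - D) N ψ ∧
      ∀ n n', n ≠ n' →
        (inner ℂ (ψ n) (ψ n') : ℂ) =
          -((D : ℂ) / ((N : ℂ) - (D : ℂ))) * (inner ℂ (φ n) (φ n') : ℂ) := by
  exact stmt1_general (Fintype.card_fin N) hD hDN hdim finrank_euclideanSpace_fin hETF
end

section
/- Let G be a finite abelian group, let H be a proper subgroup of G of order H, set N = [G:H], and let D ⊆ G be a nonempty subset with #D = D. Let (ψ_γ)_γ be the harmonic frame on D, ψ_γ(d) = D^{−1/2} γ(d). Then D is an H-relative difference set RDS(N,H,D,Λ) for G (for some integer Λ) if and only if for all characters γ₁ ≠ γ₂ of G: |⟨ψ_{γ₁}, ψ_{γ₂}⟩|² = (N−D)/(D(N−1)) whenever γ₁γ₂^{−1} ∈ H^⊥, and |⟨ψ_{γ₁}, ψ_{γ₂}⟩|² = 1/D whenever γ₁γ₂^{−1} ∉ H^⊥. In particular, partitioning the characters of G into the cosets of H^⊥ then yields H mutually unbiased ETF(D,N): the resulting family is an MUETF(D,N,H) for ℂ^D. -/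
open scoped BigOperators

/-- `𝒟` is an `H`-relative difference set with parameter `Λ` for the finite abelian
group `G`. -/
def IsRDS {G : Type*} [AddCommGroup G] [Fintype G] [DecidableEq G]
    (H : AddSubgroup G) (𝒟 : Finset G) (Λ : ℕ) : Prop :=
  (∀ g ∈ H, g ≠ 0 → ((𝒟 ×ˢ 𝒟).filter fun p => p.1 - p.2 = g).card = 0) ∧
  (∀ g : G, g ∉ H → ((𝒟 ×ˢ 𝒟).filter fun p => p.1 - p.2 = g).card = Λ)

/-- A doubly-indexed family `(ψ m n)` of unit vectors is an `MUETF(D,N,M)`: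
`M` mutually unbiased `ETF(D,N)`. -/
def IsMUETF {μ ν E : Type*} [NormedAddCommGroup E] [InnerProductSpace ℂ E]
    (D N : ℕ) (ψ : μ → ν → E) : Prop :=
  (∀ m n, ‖ψ m n‖ = 1) ∧
  (∀ m n n', n ≠ n' →
    ‖(inner ℂ (ψ m n) (ψ m n') : ℂ)‖ ^ 2 = ((N : ℝ) - D) / (D * ((N : ℝ) - 1))) ∧
  (∀ m m' n n', m ≠ m' → ‖(inner ℂ (ψ m n) (ψ m' n') : ℂ)‖ ^ 2 = 1 / (D : ℝ))

/-!
Let `a(g)` be the number of ways to write `g` as a difference of two elements of `𝒟`. The set `𝒟`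
is an `H`-RDS with parameter `Λ` exactly when `a = #𝒟 · δ₀ + Λ · (1 - 1_H)`. The Fourier transform
of `a` at `χ` is `|∑ d ∈ 𝒟, χ d|²`, while that of `1_H` is `#H · 1_{H^⊥}`; so, by injectivity of the
Fourier transform, `𝒟` is an `H`-RDS iff `|∑ d ∈ 𝒟, χ d|²` equals `#𝒟` off `H^⊥` and
`#𝒟 - Λ #H` on `H^⊥ \ {1}`, with `Λ #H ([G : H] - 1) = #𝒟 (#𝒟 - 1)` from `χ = 1`. The inner
products of the harmonic frame are these character sums, divided by `#𝒟`, at `χ = γ₁⁻¹ γ₂`.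
-/

section Annihilator

variable {G M R : Type*} [AddCommGroup G]

/-- The annihilator `H^⊥` of a subgroup `H`: the characters that are trivial on `H`. The group
`AddChar G M` is written multiplicatively, so `H^⊥` is a `Subgroup`. -/
def charAnnihilator [CommMonoid M] (H : AddSubgroup G) : Subgroup (AddChar G M) where
  carrier := {χ | ∀ h ∈ H, χ h = 1}
  one_mem' _ _ := rfl
  mul_mem' hχ hφ h hh := by rw [AddChar.mul_apply, hχ h hh, hφ h hh, one_mul]
  inv_mem' hχ h hh := hχ (-h) (H.neg_mem hh)

lemma mem_charAnnihilator [CommMonoid M] {H : AddSubgroup G} {χ : AddChar G M} :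
    χ ∈ charAnnihilator H ↔ ∀ h ∈ H, χ h = 1 := Iff.rfl

lemma inv_mul_mem_charAnnihilator [DivisionCommMonoid M] {H : AddSubgroup G}
    {χ φ : AddChar G M} : χ⁻¹ * φ ∈ charAnnihilator H ↔ ∀ h ∈ H, χ h = φ h := by
  refine forall₂_congr fun h _ => ?_
  rw [AddChar.mul_apply, AddChar.inv_apply', (χ.val_isUnit h).inv_mul_eq_one]

open Classical in
lemma sum_addSubgroup_addChar [CommSemiring R] [IsDomain R] (H : AddSubgroup G) [Fintype H]
    (χ : AddChar G R) :
    ∑ h : H, χ h = if χ ∈ charAnnihilator H then (Nat.card H : R) else 0 := by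
  have trivial_iff : χ.compAddMonoidHom H.subtype = 0 ↔ χ ∈ charAnnihilator H := by
    simp [AddChar.eq_zero_iff, mem_charAnnihilator]
  simpa [trivial_iff] using AddChar.sum_eq_ite (χ.compAddMonoidHom H.subtype)

variable [Finite G] (H : AddSubgroup G)

lemma card_charAnnihilator_mul_card :
    Nat.card (charAnnihilator H : Subgroup (AddChar G ℂ)) * Nat.card H = Nat.card G := by
  classical
  have := Fintype.ofFinite G
  have double_count : (Nat.card (charAnnihilator H : Subgroup (AddChar G ℂ)) : ℂ) * Nat.card H =
      Nat.card G := calc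
    _ = ∑ χ : AddChar G ℂ, if χ ∈ charAnnihilator H then (Nat.card H : ℂ) else 0 := by
      simp [Finset.sum_ite, ← Fintype.card_subtype]
    _ = ∑ χ : AddChar G ℂ, ∑ h : H, χ h := by simp only [sum_addSubgroup_addChar]
    _ = ∑ h : H, ∑ χ : AddChar G ℂ, χ h := Finset.sum_comm
    _ = Nat.card G := by simp [AddChar.sum_apply_eq_ite]
  exact mod_cast double_count

lemma card_charAnnihilator :
    Nat.card (charAnnihilator H : Subgroup (AddChar G ℂ)) = H.index :=
  Nat.eq_of_mul_eq_mul_right Nat.card_pos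
    ((card_charAnnihilator_mul_card H).trans H.index_mul_card.symm)

lemma index_charAnnihilator :
    (charAnnihilator H : Subgroup (AddChar G ℂ)).index = Nat.card H := by
  have := Fintype.ofFinite G
  refine Nat.eq_of_mul_eq_mul_left
    (Nat.card_pos (α := (charAnnihilator H : Subgroup (AddChar G ℂ)))) ?_
  rw [Subgroup.card_mul_index, card_charAnnihilator_mul_card, Nat.card_eq_fintype_card,
    Nat.card_eq_fintype_card, AddChar.card_eq]

end Annihilator

lemma exists_fin_prod_equiv_inv_mul_mem_iff {A : Type*} [Group A] [Finite A] (K : Subgroup A) :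
    ∃ e : Fin K.index × Fin (Nat.card K) ≃ A, ∀ p q, (e p)⁻¹ * e q ∈ K ↔ p.1 = q.1 := by
  let cosets : Fin K.index ≃ A ⧸ K := (Finite.equivFin (A ⧸ K)).symm
  let e := (cosets.prodCongr (Finite.equivFin K).symm).trans
    Subgroup.groupEquivQuotientProdSubgroup.symm
  have mk_e (p) : (e p : A ⧸ K) = cosets p.1 :=
    congrArg Prod.fst (Subgroup.groupEquivQuotientProdSubgroup.apply_symm_apply _)
  refine ⟨e, fun p q => ?_⟩
  rw [← QuotientGroup.eq, mk_e, mk_e, cosets.apply_eq_iff_eq]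

section Fourier

variable {G : Type*} [AddCommGroup G] [Fintype G]

lemma eq_of_sum_mul_addChar_eq {a b : G → ℂ}
    (h : ∀ χ : AddChar G ℂ, ∑ g, a g * χ g = ∑ g, b g * χ g) : a = b := by
  classical
  have eq_on_basis : dotProductEquiv ℂ G a = dotProductEquiv ℂ G b :=
    (AddChar.complexBasis G).ext fun χ => by simp [dotProduct, h]
  exact (dotProductEquiv ℂ G).injective eq_on_basis

open Classical in
lemma sum_ite_mem_zero_addChar (H : AddSubgroup G) (χ : AddChar G ℂ) :
    ∑ g, (if g ∈ H then 0 else χ g) =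
      (if χ = 1 then (Nat.card G : ℂ) else 0) -
        if χ ∈ charAnnihilator H then (Nat.card H : ℂ) else 0 := by
  have split (g : G) : (if g ∈ H then 0 else χ g) = χ g - if g ∈ H then χ g else 0 := by
    split_ifs <;> simp
  have sum_mem : ∑ g, (if g ∈ H then χ g else 0) = ∑ h : H, χ h := by
    rw [← Finset.sum_filter, Finset.sum_subtype (p := (· ∈ H)) _ (by simp)]
  simp only [split, Finset.sum_sub_distrib, sum_mem, sum_addSubgroup_addChar,
    AddChar.sum_eq_ite, AddChar.one_eq_zero, Nat.card_eq_fintype_card]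

open Classical in
lemma sum_ite_zero_add_ite_mem_mul_addChar [DecidableEq G] (H : AddSubgroup G) (k c : ℂ)
    (χ : AddChar G ℂ) :
    ∑ g, ((if g = 0 then k else 0) + if g ∈ H then 0 else c) * χ g =
      k + c * ((if χ = 1 then (Nat.card G : ℂ) else 0) -
        if χ ∈ charAnnihilator H then (Nat.card H : ℂ) else 0) := by
  have summand (g : G) : ((if g = 0 then k else 0) + if g ∈ H then 0 else c) * χ g =
      (if g = 0 then k * χ g else 0) + c * if g ∈ H then 0 else χ g := by
    split_ifs <;> ring
  simp only [summand, Finset.sum_add_distrib, ← Finset.mul_sum, sum_ite_mem_zero_addChar,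
    Fintype.sum_ite_eq', AddChar.map_zero_eq_one, mul_one]

end Fourier

section DifferenceSets

variable {G : Type*} [AddCommGroup G] [DecidableEq G]

/-- The number of representations of `g` as a difference of two elements of `S`, i.e. the
autocorrelation of the indicator function of `S`. -/
def diffCount (S : Finset G) (g : G) : ℕ :=
  ((S ×ˢ S).filter fun p => p.1 - p.2 = g).card

lemma diffCount_zero (S : Finset G) : diffCount S 0 = S.card := by
  simp only [diffCount, sub_eq_zero, ← Finset.diag_eq_filter, Finset.diag_card]

lemma sum_diffCount_mul_addChar [Fintype G] (S : Finset G) (χ : AddChar G ℂ) :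
    ∑ g, (diffCount S g : ℂ) * χ g = ((‖∑ d ∈ S, χ d‖ ^ 2 : ℝ) : ℂ) := by
  calc ∑ g, (diffCount S g : ℂ) * χ g
      = ∑ p ∈ S ×ˢ S, χ (p.1 - p.2) := by
        simp only [← Finset.sum_fiberwise' (S ×ˢ S) (fun p => p.1 - p.2) χ, Finset.sum_const,
          nsmul_eq_mul, diffCount]
    _ = (∑ d ∈ S, χ d) * (starRingEnd ℂ) (∑ d ∈ S, χ d) := by
        simp only [map_sum, Finset.sum_mul_sum, Finset.sum_product, sub_eq_add_neg,
          AddChar.map_add_eq_mul, AddChar.map_neg_eq_conj]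
    _ = ((‖∑ d ∈ S, χ d‖ ^ 2 : ℝ) : ℂ) := by
        rw [Complex.mul_conj', Complex.ofReal_pow]

variable {H : AddSubgroup G} {S : Finset G}

open Classical in
lemma diffCount_eq_iff_norm_sum_addChar_sq_eq [Finite G] {c : ℝ} :
    (∀ g, (diffCount S g : ℝ) =
        (if g = 0 then (S.card : ℝ) else 0) + if g ∈ H then 0 else c) ↔
      ∀ χ : AddChar G ℂ, ‖∑ d ∈ S, χ d‖ ^ 2 = S.card +
        c * ((if χ = 1 then (Nat.card G : ℝ) else 0) -
          if χ ∈ charAnnihilator H then (Nat.card H : ℝ) else 0) := by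
  have := Fintype.ofFinite G
  have eq_iff_complex (g : G) : (diffCount S g : ℝ) =
        (if g = 0 then (S.card : ℝ) else 0) + (if g ∈ H then 0 else c) ↔ (diffCount S g : ℂ) =
        (if g = 0 then (S.card : ℂ) else 0) + if g ∈ H then 0 else (c : ℂ) := by
    rw [← Complex.ofReal_inj]
    push_cast [apply_ite Complex.ofReal]
    rfl
  simp only [eq_iff_complex]
  constructor
  · intro h χ
    rw [← Complex.ofReal_inj, ← sum_diffCount_mul_addChar]
    simp only [h, sum_ite_zero_add_ite_mem_mul_addChar]
    push_cast [apply_ite Complex.ofReal]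
    rfl
  · intro h
    refine congrFun (eq_of_sum_mul_addChar_eq fun χ => ?_)
    rw [sum_diffCount_mul_addChar, sum_ite_zero_add_ite_mem_mul_addChar, h χ]
    push_cast [apply_ite Complex.ofReal]
    rfl

variable [Fintype G]

open Classical in
lemma isRDS_iff_diffCount_eq {Λ : ℕ} :
    IsRDS H S Λ ↔
      ∀ g, diffCount S g = (if g = 0 then S.card else 0) + if g ∈ H then 0 else Λ := by
  change ((∀ g ∈ H, g ≠ 0 → diffCount S g = 0) ∧ ∀ g ∉ H, diffCount S g = Λ) ↔ _
  constructor
  · rintro ⟨on_H, off_H⟩ g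
    by_cases hg : g ∈ H
    · obtain rfl | hg0 := eq_or_ne g 0
      · simp [diffCount_zero]
      · simpa [hg, hg0] using on_H g hg hg0
    · have hg0 : g ≠ 0 := (ne_of_mem_of_not_mem H.zero_mem hg).symm
      simpa [hg, hg0] using off_H g hg
  · intro h
    refine ⟨fun g hg hg0 => by simpa [hg, hg0] using h g, fun g hg => ?_⟩
    have hg0 : g ≠ 0 := (ne_of_mem_of_not_mem H.zero_mem hg).symm
    simpa [hg, hg0] using h g

open Classical in
lemma exists_isRDS_iff_exists_real :
    (∃ Λ, IsRDS H S Λ) ↔ ∃ c : ℝ,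
      ∀ g, (diffCount S g : ℝ) = (if g = 0 then (S.card : ℝ) else 0) + if g ∈ H then 0 else c := by
  simp only [isRDS_iff_diffCount_eq]
  constructor
  · rintro ⟨Λ, h⟩
    exact ⟨Λ, fun g => by rw [h g]; push_cast; rfl⟩
  · -- Every `g ∉ H` gives `c = diffCount S g`, so `c` is a natural number unless `H = ⊤`.
    rintro ⟨c, h⟩
    refine ⟨⌊c⌋₊, fun g => ?_⟩
    by_cases hg : g ∈ H
    · have hcount := h g
      rw [if_pos hg] at hcount ⊢
      exact mod_cast hcount
    · have hg0 : g ≠ 0 := (ne_of_mem_of_not_mem H.zero_mem hg).symm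
      have hc : (diffCount S g : ℝ) = c := by simpa [hg, hg0] using h g
      simp [hg, hg0, ← hc]

open Classical in
lemma exists_isRDS_iff_norm_sum_addChar_sq_eq (hH : H ≠ ⊤) :
    (∃ Λ, IsRDS H S Λ) ↔ ∀ χ : AddChar G ℂ, χ ≠ 1 →
      ‖∑ d ∈ S, χ d‖ ^ 2 = if χ ∈ charAnnihilator H then
        (S.card : ℝ) * (H.index - S.card) / (H.index - 1) else (S.card : ℝ) := by
  have card_H : (Nat.card H : ℝ) ≠ 0 := Nat.cast_ne_zero.2 Nat.card_pos.ne'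
  have index_sub_one : (H.index : ℝ) - 1 ≠ 0 :=
    sub_ne_zero.2 (mod_cast mt AddSubgroup.index_eq_one.1 hH)
  have card_G : (Nat.card G : ℝ) = H.index * Nat.card H := mod_cast H.index_mul_card.symm
  have sum_one : ‖∑ d ∈ S, (1 : AddChar G ℂ) d‖ ^ 2 = (S.card : ℝ) ^ 2 := by simp
  rw [exists_isRDS_iff_exists_real]
  simp only [diffCount_eq_iff_norm_sum_addChar_sq_eq]
  constructor
  · rintro ⟨c, h⟩ χ hχ
    have at_one : (S.card : ℝ) ^ 2 = S.card + c * (H.index * Nat.card H - Nat.card H) := by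
      rw [← sum_one, h 1, if_pos rfl, if_pos (one_mem _), card_G]
    rw [h χ, if_neg hχ]
    split_ifs
    · field_simp
      linear_combination at_one
    · ring
  · intro h
    refine ⟨S.card * (S.card - 1) / (Nat.card H * (H.index - 1)), fun χ => ?_⟩
    obtain rfl | hχ := eq_or_ne χ 1
    · rw [sum_one, if_pos rfl, if_pos (one_mem _), card_G]
      field_simp
      ring
    · rw [h χ hχ, if_neg hχ]
      split_ifs
      · field_simp
        ring
      · ring

end DifferenceSets

section HarmonicFrame

variable {G : Type*} [AddCommGroup G]

/-- The harmonic frame on `𝒟`: the characters of `G`, restricted to `𝒟` and scaled to unit norm. -/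
noncomputable def harmonicFrame (𝒟 : Finset G) (γ : AddChar G ℂ) : EuclideanSpace ℂ 𝒟 :=
  WithLp.toLp 2 fun d => (Real.sqrt 𝒟.card : ℂ)⁻¹ * γ d

variable {𝒟 : Finset G}

lemma inner_harmonicFrame [Finite G] (γ₁ γ₂ : AddChar G ℂ) :
    (inner ℂ (harmonicFrame 𝒟 γ₁) (harmonicFrame 𝒟 γ₂) : ℂ) =
      (𝒟.card : ℂ)⁻¹ * ∑ d ∈ 𝒟, (γ₁⁻¹ * γ₂) d := by
  have scale_sq : (Real.sqrt 𝒟.card : ℂ)⁻¹ * (Real.sqrt 𝒟.card : ℂ)⁻¹ = (𝒟.card : ℂ)⁻¹ := by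
    rw [← mul_inv, ← Complex.ofReal_mul, Real.mul_self_sqrt (Nat.cast_nonneg _),
      Complex.ofReal_natCast]
  rw [PiLp.inner_apply, Finset.mul_sum, ← Finset.sum_coe_sort 𝒟]
  refine Finset.sum_congr rfl fun d _ => ?_
  simp only [harmonicFrame, RCLike.inner_apply, map_mul, map_inv₀, Complex.conj_ofReal,
    AddChar.mul_apply, AddChar.inv_apply, AddChar.map_neg_eq_conj, ← scale_sq]
  ring

lemma norm_inner_harmonicFrame_sq [Finite G] (γ₁ γ₂ : AddChar G ℂ) :
    ‖(inner ℂ (harmonicFrame 𝒟 γ₁) (harmonicFrame 𝒟 γ₂) : ℂ)‖ ^ 2 =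
      ‖∑ d ∈ 𝒟, (γ₁⁻¹ * γ₂) d‖ ^ 2 / (𝒟.card : ℝ) ^ 2 := by
  rw [inner_harmonicFrame, norm_mul, norm_inv, Complex.norm_natCast, mul_pow, inv_pow,
    inv_mul_eq_div]

lemma norm_harmonicFrame [Finite G] (h𝒟 : 𝒟.Nonempty) (γ : AddChar G ℂ) :
    ‖harmonicFrame 𝒟 γ‖ = 1 := by
  have card_ne_zero : (𝒟.card : ℂ) ≠ 0 := Nat.cast_ne_zero.2 h𝒟.card_ne_zero
  rw [norm_eq_sqrt_re_inner (𝕜 := ℂ), inner_harmonicFrame]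
  simp [card_ne_zero]

variable {H : AddSubgroup G}

open Classical in
theorem exists_isRDS_iff_norm_inner_harmonicFrame_sq_eq [Fintype G] [DecidableEq G] (hH : H ≠ ⊤)
    (h𝒟 : 𝒟.Nonempty) :
    (∃ Λ, IsRDS H 𝒟 Λ) ↔ ∀ γ₁ γ₂ : AddChar G ℂ, γ₁ ≠ γ₂ →
      ‖(inner ℂ (harmonicFrame 𝒟 γ₁) (harmonicFrame 𝒟 γ₂) : ℂ)‖ ^ 2 =
        if γ₁⁻¹ * γ₂ ∈ charAnnihilator H then
          ((H.index : ℝ) - 𝒟.card) / (𝒟.card * ((H.index : ℝ) - 1)) else 1 / (𝒟.card : ℝ) := by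
  have card_ne_zero : (𝒟.card : ℝ) ≠ 0 := Nat.cast_ne_zero.2 h𝒟.card_ne_zero
  have rescale (χ : AddChar G ℂ) :
      ‖∑ d ∈ 𝒟, χ d‖ ^ 2 / (𝒟.card : ℝ) ^ 2 = (if χ ∈ charAnnihilator H then
          ((H.index : ℝ) - 𝒟.card) / (𝒟.card * ((H.index : ℝ) - 1)) else 1 / (𝒟.card : ℝ)) ↔
        ‖∑ d ∈ 𝒟, χ d‖ ^ 2 = if χ ∈ charAnnihilator H then
          (𝒟.card : ℝ) * (H.index - 𝒟.card) / (H.index - 1) else (𝒟.card : ℝ) := by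
    rw [div_eq_iff (pow_ne_zero 2 card_ne_zero)]
    refine iff_of_eq (congrArg _ ?_)
    split_ifs <;> field_simp
  simp only [norm_inner_harmonicFrame_sq, rescale, exists_isRDS_iff_norm_sum_addChar_sq_eq hH]
  constructor
  · exact fun h γ₁ γ₂ hne => h _ (mt inv_mul_eq_one.1 hne)
  · exact fun h χ hχ => by simpa using h 1 χ hχ.symm

open Classical in
theorem exists_isMUETF_harmonicFrame [Finite G] (h𝒟 : 𝒟.Nonempty)
    (hinner : ∀ γ₁ γ₂ : AddChar G ℂ, γ₁ ≠ γ₂ →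
      ‖(inner ℂ (harmonicFrame 𝒟 γ₁) (harmonicFrame 𝒟 γ₂) : ℂ)‖ ^ 2 =
        if γ₁⁻¹ * γ₂ ∈ charAnnihilator H then
          ((H.index : ℝ) - 𝒟.card) / (𝒟.card * ((H.index : ℝ) - 1)) else 1 / (𝒟.card : ℝ)) :
    ∃ e : Fin (Nat.card H) × Fin H.index ≃ AddChar G ℂ,
      (∀ m n n', ∀ h ∈ H, e (m, n) h = e (m, n') h) ∧
      IsMUETF 𝒟.card H.index fun m n => harmonicFrame 𝒟 (e (m, n)) := by
  have coset_equiv := exists_fin_prod_equiv_inv_mul_mem_iff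
    (charAnnihilator H : Subgroup (AddChar G ℂ))
  rw [index_charAnnihilator, card_charAnnihilator] at coset_equiv
  obtain ⟨e, he⟩ := coset_equiv
  refine ⟨e, fun m n n' => inv_mul_mem_charAnnihilator.1 ((he _ _).2 rfl),
    fun m n => norm_harmonicFrame h𝒟 _, fun m n n' hn => ?_, fun m m' n n' hm => ?_⟩
  · rw [hinner _ _ (e.injective.ne (by simpa using hn)), if_pos ((he (m, n) (m, n')).2 rfl)]
  · rw [hinner _ _ (e.injective.ne (by simp [hm])), if_neg (mt (he _ _).1 hm)]

end HarmonicFrame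

/-- for the harmonic frame `(ψ γ)` on a `D`-element subset `𝒟` of a finite
abelian group `G` with proper subgroup `H` of order `H` and index `N`, `𝒟` is an
`H`-`RDS(N,H,D,Λ)` for some `Λ` iff for all distinct characters `γ₁, γ₂`,
`|⟨ψ γ₁, ψ γ₂⟩|² = (N−D)/(D(N−1))` when `γ₁γ₂⁻¹ ∈ H^⊥` (i.e. `γ₁` and `γ₂` agree on `H`)
and `= 1/D` otherwise; in particular, partitioning the characters into the cosets of
`H^⊥` then yields an `MUETF(D,N,H)` for `ℂ^𝒟`. -/
theorem stmt4 {G : Type*} [AddCommGroup G] [Fintype G] [DecidableEq G]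
    (H : AddSubgroup G) (hH : H ≠ ⊤) (Hc : ℕ) (hHc : Hc = Nat.card H)
    (N : ℕ) (hN : Fintype.card G = N * Hc)
    (𝒟 : Finset G) (h𝒟 : 𝒟.Nonempty) (D : ℕ) (hD : D = 𝒟.card)
    (ψ : AddChar G ℂ → EuclideanSpace ℂ ↥𝒟)
    (hψ : ∀ (γ : AddChar G ℂ) (d : ↥𝒟), ψ γ d = (Real.sqrt D : ℂ)⁻¹ * γ (d : G)) :
    ((∃ Λ : ℕ, IsRDS H 𝒟 Λ) ↔
      ∀ γ₁ γ₂ : AddChar G ℂ, γ₁ ≠ γ₂ →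
        ((∀ h ∈ H, γ₁ h = γ₂ h) →
          ‖(inner ℂ (ψ γ₁) (ψ γ₂) : ℂ)‖ ^ 2 = ((N : ℝ) - D) / (D * ((N : ℝ) - 1))) ∧
        ((¬ ∀ h ∈ H, γ₁ h = γ₂ h) →
          ‖(inner ℂ (ψ γ₁) (ψ γ₂) : ℂ)‖ ^ 2 = 1 / (D : ℝ))) ∧
    ((∃ Λ : ℕ, IsRDS H 𝒟 Λ) →
      ∃ e : Fin Hc × Fin N ≃ AddChar G ℂ,
        (∀ (m : Fin Hc) (n n' : Fin N), ∀ h ∈ H, e (m, n) h = e (m, n') h) ∧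
        IsMUETF D N fun (m : Fin Hc) (n : Fin N) => ψ (e (m, n))) := by
  classical
  subst hHc hD
  obtain rfl : N = H.index := Nat.eq_of_mul_eq_mul_right Nat.card_pos
    (hN.symm.trans (Nat.card_eq_fintype_card.symm.trans H.index_mul_card.symm))
  obtain rfl : ψ = harmonicFrame 𝒟 := funext fun γ => PiLp.ext (hψ γ)
  have rds_iff := exists_isRDS_iff_norm_inner_harmonicFrame_sq_eq hH h𝒟
  refine ⟨rds_iff.trans (forall₃_congr fun γ₁ γ₂ _ => ?_),
    fun hRDS => exists_isMUETF_harmonicFrame h𝒟 (rds_iff.1 hRDS)⟩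
  rw [← inv_mul_mem_charAnnihilator]
  split_ifs with h <;> simp [h]
end

section
/- Let Q be a prime power, J ≥ 2 an integer, F a finite field with Q^J elements with prime subfield extension E of order Q, Tr : F → E the field trace, and α a generator of the cyclic group F^×. Let D = {d ∈ ℤ/(Q^J−1) : Tr(α^d) = 1} (well defined since α^d depends only on d mod Q^J−1). For 0 ≤ m ≤ Q−2 and 0 ≤ n ≤ (Q^J−1)/(Q−1) − 1, define ψ_{m,n} ∈ ℂ^D by ψ_{m,n}(d) = Q^{−(J−1)/2}·exp(2πi(m + (Q−1)n)d/(Q^J−1)). Then each ψ_{m,n} is a unit vector, and |⟨ψ_{m,n}, ψ_{m',n'}⟩|² = 1/Q^J whenever m = m' and n ≠ n', while |⟨ψ_{m,n}, ψ_{m',n'}⟩|² = 1/Q^{J−1} whenever m ≠ m'. That is, (ψ_{m,n}) is an MUETF(Q^{J−1}, (Q^J−1)/(Q−1), Q−1) for ℂ^D. -/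
open scoped BigOperators

/-!
The key quantity is the sum `S χ c` of a multiplicative character `χ` of `F` over the elements of
trace `c`: inner products of the vectors are normalised sums `S χ 1`. Scaling by `u ∈ Eˣ` gives
`S χ (u c) = χ u * S χ c`, so for an additive character `φ` of `E` the Gauss sum of `χ` against
`φ ∘ Tr` equals `S χ 0 + S χ 1 * G(χ|_E, φ)`. If `χ|_E ≠ 1` then `S χ 0 = 0` and `S χ 1` is a
quotient of two Gauss sums of known modulus. If `χ|_E = 1`, comparing a nontrivial `φ` with the
trivial one determines `S χ 1` from a single Gauss sum of `F`. Finally, a faithful character of `F`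
restricts to a faithful character of `E`, so the exponents `m + (Q - 1) n` with equal `m` are
exactly those whose powers have the same restriction to `E`.
-/

section Characters

lemma norm_gaussSum_sq {R : Type*} [Field R] [Fintype R] {χ : MulChar R ℂ} (hχ : χ ≠ 1)
    {φ : AddChar R ℂ} (hφ : φ ≠ 1) : ‖gaussSum χ φ‖ ^ 2 = Fintype.card R := by
  have h := gaussSum_mul_gaussSum_eq_card hχ (AddChar.IsPrimitive.of_ne_one hφ)
  rw [← star_gaussSum_eq, ← starRingEnd_apply, Complex.mul_conj'] at h
  exact_mod_cast h

lemma exists_addChar_ne_one (A : Type*) [AddCommGroup A] [Finite A] [Nontrivial A] :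
    ∃ φ : AddChar A ℂ, φ ≠ 1 := by
  obtain ⟨a, ha⟩ := exists_ne (0 : A)
  obtain ⟨φ, hφ⟩ := AddChar.exists_apply_ne_zero.2 ha
  exact ⟨φ, AddChar.ne_one_iff.2 ⟨a, hφ⟩⟩

lemma toUnitHom_injective_of_isPrimitiveRoot {M R : Type*} [CommMonoid M] [Field R]
    {g : Mˣ} (hg : ∀ u, u ∈ Subgroup.zpowers g) {χ : MulChar M R}
    (hχ : IsPrimitiveRoot (χ g) (Nat.card Mˣ)) : Function.Injective χ.toUnitHom := by
  refine (injective_iff_map_eq_one _).2 fun u hu ↦ ?_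
  obtain ⟨i, rfl⟩ := hg u
  have hi : χ g ^ i = 1 := by
    rw [← MulChar.coe_toUnitHom, ← Units.val_zpow_eq_zpow_val, ← map_zpow, hu, Units.val_one]
  rwa [hχ.zpow_eq_one_iff_dvd, ← orderOf_eq_card_of_forall_mem_zpowers hg,
    orderOf_dvd_iff_zpow_eq_one] at hi

lemma orderOf_eq_card_of_toUnitHom_injective {M R : Type*} [CommMonoid M] [Finite Mˣ]
    [IsCyclic Mˣ] [CommMonoidWithZero R] {χ : MulChar M R}
    (hχ : Function.Injective χ.toUnitHom) : orderOf χ = Nat.card Mˣ := by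
  have := Fintype.ofFinite Mˣ
  obtain ⟨g, hg⟩ := IsCyclic.exists_generator (α := Mˣ)
  refine Nat.dvd_antisymm ?_ ?_
  · rw [Nat.card_eq_fintype_card]
    exact orderOf_dvd_of_pow_eq_one χ.pow_card_eq_one
  · rw [← orderOf_eq_card_of_forall_mem_zpowers hg, orderOf_dvd_iff_pow_eq_one]
    refine hχ (Units.ext ?_)
    rw [map_pow, Units.val_pow_eq_pow_val, MulChar.coe_toUnitHom, ← MulChar.pow_apply_coe,
      pow_orderOf_eq_one, MulChar.one_apply_coe, map_one, Units.val_one]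

lemma exists_mulChar_apply_generator_eq_exp {M : Type*} [CommMonoid M] [Finite Mˣ] {g : Mˣ}
    (hg : ∀ u, u ∈ Subgroup.zpowers g) :
    ∃ χ : MulChar M ℂ, χ g = Complex.exp (2 * Real.pi * Complex.I / Nat.card Mˣ) ∧
      Function.Injective χ.toUnitHom := by
  have hζ := Complex.isPrimitiveRoot_exp (Nat.card Mˣ) Nat.card_pos.ne'
  have hord : orderOf (hζ.isUnit Nat.card_pos.ne').unit ∣ orderOf g := by
    rw [orderOf_eq_card_of_forall_mem_zpowers hg, orderOf_dvd_iff_pow_eq_one]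
    exact Units.ext hζ.pow_eq_one
  have hχ : MulChar.ofUnitHom (monoidHomOfForallMemZpowers hg hord) (g : M) =
      Complex.exp (2 * Real.pi * Complex.I / Nat.card Mˣ) := by
    rw [MulChar.ofUnitHom_coe, monoidHomOfForallMemZpowers_apply_gen, IsUnit.unit_spec]
  exact ⟨_, hχ, toUnitHom_injective_of_isPrimitiveRoot hg (by rwa [hχ])⟩

lemma mulChar_pow_apply_pow_eq_exp {M : Type*} [CommMonoid M] {χ : MulChar M ℂ} {g : Mˣ} {z : ℂ}
    (hχ : χ g = Complex.exp z) (k d : ℕ) :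
    (χ ^ k) ((g : M) ^ d) = Complex.exp (((k * d : ℕ) : ℂ) * z) := by
  rw [map_pow, MulChar.pow_apply_coe, hχ, ← pow_mul, Complex.exp_nat_mul]

end Characters

section Restriction

variable {E F R : Type*} [CommSemiring E] [CommSemiring F] [Algebra E F] [CommMonoidWithZero R]

variable (E) in
/-- Restriction of multiplicative characters from an `E`-algebra `F` to `E`, as a homomorphism.
It generalizes `MulChar.domRestrictHom` from subobjects to algebras. -/
noncomputable def mulCharRestrict : MulChar F R →* MulChar E R :=
  MulChar.mulEquivToUnitHom.symm.toMonoidHom.comp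
    ((MonoidHom.compHom' (Units.map (algebraMap E F).toMonoidHom)).comp
      MulChar.mulEquivToUnitHom.toMonoidHom)

lemma mulCharRestrict_apply_coe (χ : MulChar F R) (u : Eˣ) :
    mulCharRestrict E χ u = χ (algebraMap E F u) :=
  (MulChar.equivToUnitHom_symm_coe _ u).trans (MulChar.coe_equivToUnitHom χ _)

lemma toUnitHom_mulCharRestrict_injective (hinj : Function.Injective (algebraMap E F))
    {χ : MulChar F R} (hχ : Function.Injective χ.toUnitHom) :
    Function.Injective (mulCharRestrict E χ).toUnitHom := by
  have h : (mulCharRestrict E χ).toUnitHom =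
      χ.toUnitHom.comp (Units.map (algebraMap E F).toMonoidHom) := by
    ext u
    exact mulCharRestrict_apply_coe χ u
  rw [h]
  exact hχ.comp (Units.map_injective hinj)

end Restriction

section TraceFiberSum

variable {E F : Type*} [Field E] [Field F] [Algebra E F]

variable (F) in
/-- The additive character `φ ∘ Tr` of `F` induced by an additive character `φ` of `E`. -/
noncomputable def traceAddChar (φ : AddChar E ℂ) : AddChar F ℂ :=
  φ.compAddMonoidHom (Algebra.trace E F).toAddMonoidHom

lemma traceAddChar_ne_one [Finite F] {φ : AddChar E ℂ} (hφ : φ ≠ 1) : traceAddChar F φ ≠ 1 := by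
  obtain ⟨c, hc⟩ := AddChar.ne_one_iff.1 hφ
  have : Finite E := Finite.of_injective _ (algebraMap E F).injective
  obtain ⟨x, rfl⟩ := Algebra.trace_surjective E F c
  exact AddChar.ne_one_iff.2 ⟨x, hc⟩

variable [Fintype F] [DecidableEq E]

variable (E) in
/-- The sum of a multiplicative character of `F` over the elements whose trace to `E` is `c`
(an Eisenstein sum when `c = 1`). -/
noncomputable def traceFiberSum (χ : MulChar F ℂ) (c : E) : ℂ :=
  ∑ x : F with Algebra.trace E F x = c, χ x

lemma traceFiberSum_units_mul (χ : MulChar F ℂ) (u : Eˣ) (c : E) :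
    traceFiberSum E χ (u * c) = χ (algebraMap E F u) * traceFiberSum E χ c := by
  rw [traceFiberSum, traceFiberSum, Finset.mul_sum]
  symm
  refine Finset.sum_equiv (MulAction.toPerm u) (fun x ↦ ?_) fun x _ ↦ ?_
  · simp [Units.smul_def]
  · simp [Units.smul_def, Algebra.smul_def]

lemma traceFiberSum_zero_of_restrict_ne_one {χ : MulChar F ℂ} (hχ : mulCharRestrict E χ ≠ 1) :
    traceFiberSum E χ 0 = 0 := by
  obtain ⟨u, hu⟩ := MulChar.ne_one_iff.1 hχ
  rw [mulCharRestrict_apply_coe] at hu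
  have h := traceFiberSum_units_mul χ u 0
  rw [mul_zero] at h
  exact (mul_left_eq_self₀.1 h.symm).resolve_left hu

variable [Fintype E]

lemma gaussSum_traceAddChar_eq_sum (χ : MulChar F ℂ) (φ : AddChar E ℂ) :
    gaussSum χ (traceAddChar F φ) = ∑ c, traceFiberSum E χ c * φ c := by
  simp only [gaussSum, traceFiberSum, Finset.sum_mul]
  rw [← Finset.sum_fiberwise (s := Finset.univ) (g := Algebra.trace E F)]
  refine Finset.sum_congr rfl fun c _ ↦ Finset.sum_congr rfl fun x hx ↦ ?_
  rw [← (Finset.mem_filter.1 hx).2]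
  rfl

lemma gaussSum_traceAddChar (χ : MulChar F ℂ) (φ : AddChar E ℂ) :
    gaussSum χ (traceAddChar F φ) =
      traceFiberSum E χ 0 + traceFiberSum E χ 1 * gaussSum (mulCharRestrict E χ) φ := by
  have hfiber (c : E) (hc : c ≠ 0) :
      traceFiberSum E χ c = traceFiberSum E χ 1 * mulCharRestrict E χ c := by
    lift c to Eˣ using hc.isUnit
    rw [mulCharRestrict_apply_coe, mul_comm, ← traceFiberSum_units_mul, mul_one]
  rw [gaussSum_traceAddChar_eq_sum, gaussSum, Fintype.sum_eq_add_sum_compl 0,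
    Fintype.sum_eq_add_sum_compl (0 : E) fun c ↦ mulCharRestrict E χ c * φ c, MulChar.map_zero,
    zero_mul, zero_add, AddChar.map_zero_eq_one, mul_one, Finset.mul_sum]
  congr 1
  refine Finset.sum_congr rfl fun c hc ↦ ?_
  rw [hfiber c (by simpa using hc), mul_assoc]

lemma norm_traceFiberSum_one_sq_of_restrict_ne_one {χ : MulChar F ℂ}
    (hχ : mulCharRestrict E χ ≠ 1) :
    ‖traceFiberSum E χ 1‖ ^ 2 = (Fintype.card F : ℝ) / Fintype.card E := by
  obtain ⟨φ, hφ⟩ := exists_addChar_ne_one E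
  have hχ₁ : χ ≠ 1 := by
    rintro rfl
    exact hχ (map_one _)
  have h := gaussSum_traceAddChar χ φ
  rw [traceFiberSum_zero_of_restrict_ne_one hχ, zero_add] at h
  rw [eq_div_iff (by simp), ← norm_gaussSum_sq hχ hφ,
    ← norm_gaussSum_sq hχ₁ (traceAddChar_ne_one hφ), h, norm_mul, mul_pow]

lemma traceFiberSum_one_mul_card_of_restrict_eq_one {χ : MulChar F ℂ}
    (hχ : mulCharRestrict E χ = 1) {φ : AddChar E ℂ} (hφ : φ ≠ 1) :
    traceFiberSum E χ 1 * Fintype.card E = gaussSum χ 1 - gaussSum χ (traceAddChar F φ) := by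
  have h := gaussSum_traceAddChar χ φ
  have h₁ : gaussSum χ 1 = _ := gaussSum_traceAddChar χ (1 : AddChar E ℂ)
  rw [hχ, gaussSum_one_left hφ] at h
  rw [hχ, gaussSum_one_one, Nat.card_units, Nat.card_eq_fintype_card,
    Nat.cast_pred Fintype.card_pos] at h₁
  linear_combination h - h₁

lemma traceFiberSum_one_one :
    traceFiberSum E (1 : MulChar F ℂ) 1 = (Fintype.card F : ℂ) / Fintype.card E := by
  obtain ⟨φ, hφ⟩ := exists_addChar_ne_one E
  have h := traceFiberSum_one_mul_card_of_restrict_eq_one (F := F) (map_one _) hφ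
  rw [gaussSum_one_left (traceAddChar_ne_one hφ), gaussSum_one_one, Nat.card_units,
    Nat.card_eq_fintype_card, Nat.cast_pred Fintype.card_pos] at h
  rw [eq_div_iff (by simp), h]
  ring

lemma norm_traceFiberSum_one_sq_of_restrict_eq_one {χ : MulChar F ℂ} (hχ₁ : χ ≠ 1)
    (hχ : mulCharRestrict E χ = 1) :
    ‖traceFiberSum E χ 1‖ ^ 2 = (Fintype.card F : ℝ) / Fintype.card E ^ 2 := by
  obtain ⟨φ, hφ⟩ := exists_addChar_ne_one E
  have h := traceFiberSum_one_mul_card_of_restrict_eq_one hχ hφ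
  rw [gaussSum_one_right hχ₁, zero_sub] at h
  rw [eq_div_iff (by simp), ← norm_gaussSum_sq hχ₁ (traceAddChar_ne_one hφ),
    ← norm_neg (gaussSum _ _), ← h, norm_mul, Complex.norm_natCast, mul_pow]

end TraceFiberSum

section TraceOneVector

variable {E F : Type*} [Field E] [Field F] [Fintype E] [Fintype F] [Algebra E F]

variable (E) in
/-- The restriction of a multiplicative character of `F` to the hyperplane `Tr x = 1`, normalised
to a unit vector; the hyperplane has `|F| / |E|` elements. -/
noncomputable def traceOneVector (χ : MulChar F ℂ) :
    EuclideanSpace ℂ {x : F // Algebra.trace E F x = 1} :=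
  WithLp.toLp 2 fun x ↦ (√((Fintype.card F : ℝ) / Fintype.card E) : ℂ)⁻¹ * χ x

variable [DecidableEq E]

lemma inner_traceOneVector (χ χ' : MulChar F ℂ) :
    inner ℂ (traceOneVector E χ) (traceOneVector E χ') =
      ((Fintype.card F : ℂ) / Fintype.card E)⁻¹ * traceFiberSum E (χ⁻¹ * χ') 1 := by
  have hsq : ((√((Fintype.card F : ℝ) / Fintype.card E) : ℂ)) ^ 2 =
      (Fintype.card F : ℂ) / Fintype.card E := by
    rw [← Complex.ofReal_pow, Real.sq_sqrt (by positivity)]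
    push_cast
    rfl
  rw [PiLp.inner_apply, traceFiberSum, Finset.mul_sum, ← hsq,
    ← Finset.sum_subtype_eq_sum_filter, Finset.subtype_univ]
  refine Finset.sum_congr rfl fun x _ ↦ ?_
  have hconj : starRingEnd ℂ (χ x) = χ⁻¹ x := MulChar.star_apply' χ x
  simp only [traceOneVector, RCLike.inner_apply, map_mul, map_inv₀, Complex.conj_ofReal, hconj,
    MulChar.mul_apply]
  ring

lemma norm_traceOneVector (χ : MulChar F ℂ) : ‖traceOneVector E χ‖ = 1 := by
  have h : (‖traceOneVector E χ‖ : ℂ) ^ 2 = 1 := by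
    refine (inner_self_eq_norm_sq_to_K (𝕜 := ℂ) (traceOneVector E χ)).symm.trans ?_
    rw [inner_traceOneVector, inv_mul_cancel,
      traceFiberSum_one_one, inv_mul_cancel₀ (by simp)]
  exact (pow_eq_one_iff_of_nonneg (norm_nonneg _) two_ne_zero).1 (by exact_mod_cast h)

lemma norm_inner_traceOneVector_sq_of_restrict_ne {χ χ' : MulChar F ℂ}
    (h : mulCharRestrict E χ ≠ mulCharRestrict E χ') :
    ‖inner ℂ (traceOneVector E χ) (traceOneVector E χ')‖ ^ 2 =
      (Fintype.card E : ℝ) / Fintype.card F := by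
  have hχ : mulCharRestrict E (χ⁻¹ * χ') ≠ 1 := by
    rwa [map_mul, map_inv, Ne, inv_mul_eq_one]
  rw [inner_traceOneVector, norm_mul, mul_pow, norm_traceFiberSum_one_sq_of_restrict_ne_one hχ]
  simp only [norm_inv, norm_div, Complex.norm_natCast]
  field_simp

lemma norm_inner_traceOneVector_sq_of_restrict_eq {χ χ' : MulChar F ℂ} (hne : χ ≠ χ')
    (h : mulCharRestrict E χ = mulCharRestrict E χ') :
    ‖inner ℂ (traceOneVector E χ) (traceOneVector E χ')‖ ^ 2 = 1 / (Fintype.card F : ℝ) := by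
  have hχ₁ : χ⁻¹ * χ' ≠ 1 := by rwa [Ne, inv_mul_eq_one]
  have hχ : mulCharRestrict E (χ⁻¹ * χ') = 1 := by rwa [map_mul, map_inv, inv_mul_eq_one]
  rw [inner_traceOneVector, norm_mul, mul_pow,
    norm_traceFiberSum_one_sq_of_restrict_eq_one hχ₁ hχ]
  simp only [norm_inv, norm_div, Complex.norm_natCast]
  field_simp

variable {χ : MulChar F ℂ} (hχ : Function.Injective χ.toUnitHom) {k l : ℕ}
include hχ

lemma norm_inner_traceOneVector_pow_sq_of_not_modEq (hkl : ¬k ≡ l [MOD Fintype.card E - 1]) :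
    ‖inner ℂ (traceOneVector E (χ ^ k)) (traceOneVector E (χ ^ l))‖ ^ 2 =
      (Fintype.card E : ℝ) / Fintype.card F := by
  have hE := orderOf_eq_card_of_toUnitHom_injective
    (toUnitHom_mulCharRestrict_injective (algebraMap E F).injective hχ)
  rw [Nat.card_units, Nat.card_eq_fintype_card] at hE
  apply norm_inner_traceOneVector_sq_of_restrict_ne
  rwa [map_pow, map_pow, Ne, pow_eq_pow_iff_modEq, hE]

lemma norm_inner_traceOneVector_pow_sq_of_modEq (hE : k ≡ l [MOD Fintype.card E - 1])
    (hF : ¬k ≡ l [MOD Fintype.card F - 1]) :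
    ‖inner ℂ (traceOneVector E (χ ^ k)) (traceOneVector E (χ ^ l))‖ ^ 2 =
      1 / (Fintype.card F : ℝ) := by
  have hordE := orderOf_eq_card_of_toUnitHom_injective
    (toUnitHom_mulCharRestrict_injective (algebraMap E F).injective hχ)
  have hordF := orderOf_eq_card_of_toUnitHom_injective hχ
  rw [Nat.card_units, Nat.card_eq_fintype_card] at hordE hordF
  apply norm_inner_traceOneVector_sq_of_restrict_eq
  · rwa [Ne, pow_eq_pow_iff_modEq, hordF]
  · rwa [map_pow, map_pow, pow_eq_pow_iff_modEq, hordE]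

end TraceOneVector

section Indexing

lemma not_add_mul_modEq_of_left_ne {a : ℕ} {m m' : Fin a} (hm : m ≠ m') (n n' : ℕ) :
    ¬(m : ℕ) + a * n ≡ m' + a * n' [MOD a] := by
  intro h
  have h' : (m : ℕ) ≡ m' [MOD a] := by simpa [Nat.ModEq] using h
  exact hm (Fin.ext (h'.eq_of_lt_of_lt m.2 m'.2))

lemma not_add_mul_modEq_of_right_ne {a N : ℕ} (m : Fin a) {n n' : Fin N} (hn : n ≠ n') :
    ¬(m : ℕ) + a * n ≡ m + a * n' [MOD N * a] := by
  intro h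
  have h' : finProdFinEquiv (n, m) = finProdFinEquiv (n', m) :=
    Fin.ext (h.eq_of_lt_of_lt (finProdFinEquiv (n, m)).2 (finProdFinEquiv (n', m)).2)
  exact hn (congrArg Prod.fst (finProdFinEquiv.injective h'))

lemma pow_val_bijective_of_generator {G : Type*} [Group G] [Finite G] {g : G}
    (hg : ∀ x, x ∈ Subgroup.zpowers g) {n : ℕ} (hn : Nat.card G = n) :
    Function.Bijective fun d : ZMod n ↦ g ^ d.val := by
  have : NeZero n := ⟨hn ▸ Nat.card_pos.ne'⟩
  have h : (fun d : ZMod n ↦ g ^ d.val) =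
      zmodMulEquivOfGenerator hg hn ∘ Multiplicative.ofAdd := by
    ext d
    have h := zmodMulEquivOfGenerator_apply_ofAdd_intCast hg hn d.val
    rw [zpow_natCast, Int.cast_natCast, ZMod.natCast_zmod_val] at h
    exact h.symm
  rw [h]
  exact (zmodMulEquivOfGenerator hg hn).bijective.comp Multiplicative.ofAdd.bijective

lemma exists_equiv_subtype_pow_generator {G₀ : Type*} [GroupWithZero G₀] [Finite G₀] {g : G₀ˣ}
    (hg : ∀ u, u ∈ Subgroup.zpowers g) {n : ℕ} (hn : Nat.card G₀ˣ = n) {p : G₀ → Prop}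
    (hp : ¬p 0) {s : Finset (ZMod n)} (hs : ∀ d, d ∈ s ↔ p ((g : G₀) ^ d.val)) :
    ∃ e : s ≃ {x // p x}, ∀ d : s, (e d : G₀) = (g : G₀) ^ (d : ZMod n).val := by
  have hbij := pow_val_bijective_of_generator hg hn
  refine ⟨.ofBijective (fun d ↦ ⟨(g : G₀) ^ (d : ZMod n).val, (hs d).1 d.2⟩) ⟨?_, ?_⟩, fun _ ↦ rfl⟩
  · intro d d' h
    exact Subtype.ext (hbij.1 (Units.ext (by simpa using h)))
  · rintro ⟨x, hx⟩
    lift x to G₀ˣ using (ne_of_apply_ne p fun h ↦ hp (h ▸ hx)).isUnit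
    obtain ⟨d, rfl⟩ := hbij.2 x
    exact ⟨⟨d, (hs d).2 (by simpa using hx)⟩, by simp⟩

end Indexing

lemma exists_linearIsometryEquiv_traceOneVector_pow {E F : Type*} [Field E] [Field F] [Fintype E]
    [Fintype F] [DecidableEq E] [Algebra E F] {α : Fˣ} (hα : ∀ u, u ∈ Subgroup.zpowers α) {M : ℕ}
    (hM : Nat.card Fˣ = M) {𝒟 : Finset (ZMod M)}
    (h𝒟 : ∀ d, d ∈ 𝒟 ↔ Algebra.trace E F ((α : F) ^ d.val) = 1) :
    ∃ (χ : MulChar F ℂ) (U : EuclideanSpace ℂ {x : F // Algebra.trace E F x = 1} ≃ₗᵢ[ℂ]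
        EuclideanSpace ℂ 𝒟), Function.Injective χ.toUnitHom ∧
      ∀ (k : ℕ) (d : 𝒟), U (traceOneVector E (χ ^ k)) d =
        (√((Fintype.card F : ℝ) / Fintype.card E) : ℂ)⁻¹ *
          Complex.exp (2 * Real.pi * Complex.I * ((k * (d : ZMod M).val : ℕ) : ℂ) / M) := by
  obtain ⟨χ, hχα, hχ⟩ := exists_mulChar_apply_generator_eq_exp hα
  obtain ⟨e, he⟩ := exists_equiv_subtype_pow_generator hα hM (p := (Algebra.trace E F · = 1))
    (by simp) h𝒟
  refine ⟨χ, LinearIsometryEquiv.piLpCongrLeft 2 ℂ ℂ e.symm, hχ, fun k d ↦ ?_⟩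
  change _ * (χ ^ k) (e d) = _
  rw [he, mulChar_pow_apply_pow_eq_exp hχα, hM,
    mul_comm (2 * (Real.pi : ℂ) * Complex.I), ← mul_div_assoc]

lemma algebraMap_trace_eq_sum_range_pow {E F : Type*} [Field E] [Field F] [Finite F] [Algebra E F]
    {q r : ℕ} (hE : Nat.card E = q) (hF : Nat.card F = q ^ r) (x : F) :
    algebraMap E F (Algebra.trace E F x) = ∑ j ∈ Finset.range r, x ^ q ^ j := by
  have : Finite E := Finite.of_injective _ (algebraMap E F).injective
  have hr : Module.finrank E F = r := by
    rw [Module.natCard_eq_pow_finrank (K := E), hE] at hF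
    exact Nat.pow_right_injective (hE ▸ Finite.one_lt_card) hF
  rw [FiniteField.algebraMap_trace_eq_sum_pow, hr, hE]

lemma one_div_mul_eq_sub_div_mul_sub_one {D N q : ℕ} (hD : D ≠ 0) (hq : q ≠ 0) (hN₁ : N ≠ 1)
    (hN : N * (q - 1) = D * q - 1) :
    1 / (D * q : ℝ) = ((N : ℝ) - D) / (D * ((N : ℝ) - 1)) := by
  have hN' : (N : ℝ) * (q - 1) = D * q - 1 := by
    rw [← Nat.cast_pred (Nat.pos_of_ne_zero hq), ← Nat.cast_mul, hN,
      Nat.cast_pred (by positivity), Nat.cast_mul]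
  have : (N : ℝ) - 1 ≠ 0 := sub_ne_zero.2 (by exact_mod_cast hN₁)
  field_simp
  linear_combination -hN'

lemma isMUETF_of_mul_sub_one_eq {μ V : Type*} [NormedAddCommGroup V] [InnerProductSpace ℂ V]
    {D N q : ℕ} (hD : D ≠ 0) (hq : q ≠ 0) (hN : N * (q - 1) = D * q - 1) {ψ : μ → Fin N → V}
    (hnorm : ∀ m n, ‖ψ m n‖ = 1)
    (hsame : ∀ m n n', n ≠ n' → ‖inner ℂ (ψ m n) (ψ m n')‖ ^ 2 = 1 / (D * q : ℝ))
    (hdiff : ∀ m m' n n', m ≠ m' → ‖inner ℂ (ψ m n) (ψ m' n')‖ ^ 2 = 1 / (D : ℝ)) :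
    IsMUETF D N ψ := by
  refine ⟨hnorm, fun m n n' h ↦ ?_, hdiff⟩
  have hN₁ : N ≠ 1 := fun h₁ ↦ h (Fin.ext (by omega))
  rw [hsame m n n' h, one_div_mul_eq_sub_div_mul_sub_one hD hq hN₁ hN]

/-- for a prime power `Q`, `J ≥ 2`, `F` the field with `Q^J` elements with
subfield `E` of order `Q`, trace `Tr`, a generator `α` of `F^×`, and
`𝒟 = {d ∈ ℤ/(Q^J−1) : Tr(α^d) = 1}`, the vectors
`ψ m n (d) = Q^{−(J−1)/2}·exp(2πi(m + (Q−1)n)d/(Q^J−1))`, for `0 ≤ m ≤ Q−2` and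
`0 ≤ n ≤ (Q^J−1)/(Q−1) − 1`, are unit vectors with
`|⟨ψ m n, ψ m' n'⟩|² = 1/Q^J` when `m = m'`, `n ≠ n'`, and `= 1/Q^{J−1}` when `m ≠ m'`;
that is, they form an `MUETF(Q^{J−1}, (Q^J−1)/(Q−1), Q−1)` for `ℂ^𝒟`. -/
theorem stmt11 (Q J : ℕ) (hQ : IsPrimePow Q) (hJ : 2 ≤ J)
    {F : Type*} [Field F] [Fintype F] (hF : Fintype.card F = Q ^ J)
    (E : Subfield F) (hE : Nat.card E = Q)
    (Tr : F → F) (hTr : ∀ x, Tr x = ∑ j ∈ Finset.range J, x ^ Q ^ j)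
    (α : Fˣ) (hα : ∀ u : Fˣ, u ∈ Subgroup.zpowers α)
    (𝒟 : Finset (ZMod (Q ^ J - 1)))
    (h𝒟 : ∀ d : ZMod (Q ^ J - 1), d ∈ 𝒟 ↔ Tr ((α : F) ^ d.val) = 1)
    (ψ : Fin (Q - 1) → Fin ((Q ^ J - 1) / (Q - 1)) → EuclideanSpace ℂ ↥𝒟)
    (hψ : ∀ m n (d : ↥𝒟), ψ m n d =
      ((Real.sqrt (Q ^ (J - 1)) : ℝ) : ℂ)⁻¹ *
        Complex.exp (2 * Real.pi * Complex.I *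
          ((((m : ℕ) + (Q - 1) * (n : ℕ)) * (d : ZMod (Q ^ J - 1)).val : ℕ) : ℂ) /
          ((Q ^ J - 1 : ℕ) : ℂ))) :
    (∀ m n, ‖ψ m n‖ = 1) ∧
    (∀ m n n', n ≠ n' →
      ‖(inner ℂ (ψ m n) (ψ m n') : ℂ)‖ ^ 2 = 1 / (Q ^ J : ℝ)) ∧
    (∀ m m' n n', m ≠ m' →
      ‖(inner ℂ (ψ m n) (ψ m' n') : ℂ)‖ ^ 2 = 1 / (Q ^ (J - 1) : ℝ)) ∧
    IsMUETF (Q ^ (J - 1)) ((Q ^ J - 1) / (Q - 1)) ψ := by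
  classical
  have := Fintype.ofFinite E
  have hcE : Fintype.card E = Q := by rw [← Nat.card_eq_fintype_card, hE]
  have hcF : Nat.card Fˣ = Q ^ J - 1 := by rw [Nat.card_units, Nat.card_eq_fintype_card, hF]
  have hpow : Q ^ (J - 1) * Q = Q ^ J := pow_sub_one_mul (by omega) Q
  have hdiv : (Q : ℝ) ^ J / Q = Q ^ (J - 1) :=
    (eq_div_of_mul_eq (by exact_mod_cast hQ.ne_zero) (by exact_mod_cast hpow)).symm
  have hN : (Q ^ J - 1) / (Q - 1) * (Q - 1) = Q ^ J - 1 :=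
    Nat.div_mul_cancel (by simpa using Nat.sub_dvd_pow_sub_pow Q 1 J)
  have htrace (d) : d ∈ 𝒟 ↔ Algebra.trace E F ((α : F) ^ d.val) = 1 := by
    rw [h𝒟, hTr, ← algebraMap_trace_eq_sum_range_pow hE (by rw [Nat.card_eq_fintype_card, hF]),
      map_eq_one_iff _ (algebraMap E F).injective]
  obtain ⟨χ, U, hχ, hU⟩ := exists_linearIsometryEquiv_traceOneVector_pow hα hcF htrace
  have hψU (m n) : ψ m n = U (traceOneVector E (χ ^ (m + (Q - 1) * n : ℕ))) := by
    ext d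
    rw [hψ, hU, hF, hcE, Nat.cast_pow, hdiv]
  have hnorm (m n) : ‖ψ m n‖ = 1 := by rw [hψU, U.norm_map, norm_traceOneVector]
  have hsame (m n n') (h : n ≠ n') : ‖inner ℂ (ψ m n) (ψ m n')‖ ^ 2 = 1 / (Q ^ J : ℝ) := by
    rw [hψU, hψU, U.inner_map_map, norm_inner_traceOneVector_pow_sq_of_modEq hχ, hF, Nat.cast_pow]
    · simp [hcE, Nat.ModEq]
    · simpa only [hF, hN] using not_add_mul_modEq_of_right_ne m h
  have hdiff (m m' n n') (h : m ≠ m') :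
      ‖inner ℂ (ψ m n) (ψ m' n')‖ ^ 2 = 1 / (Q ^ (J - 1) : ℝ) := by
    rw [hψU, hψU, U.inner_map_map, norm_inner_traceOneVector_pow_sq_of_not_modEq hχ
      (hcE ▸ not_add_mul_modEq_of_left_ne h n n'), hF, hcE, Nat.cast_pow, ← hdiv, one_div_div]
  refine ⟨hnorm, hsame, hdiff, isMUETF_of_mul_sub_one_eq (pow_ne_zero _ hQ.ne_zero) hQ.ne_zero
    (hN.trans (by rw [hpow])) hnorm (fun m n n' h ↦ ?_) (by exact_mod_cast hdiff)⟩
  rw [hsame m n n' h, ← Nat.cast_mul, hpow, Nat.cast_pow]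
end

section
/- Let D < N < 2D be positive integers such that N−D divides D(N−1) and Q := D(N−1)/(N−D) is a prime power. If an ETF(D,N) exists in ℂ^D, then for every integer J ≥ 1 there exists an ETF(D^{(J)}, N^{(J)}) in ℂ^{D^{(J)}}, where D^{(J)} = D·Q^{J−1} and N^{(J)} = N·(Q^J−1)/(Q−1). -/
open scoped BigOperators

/-! Two distinct vectors of the given `ETF(D,N)` have an inner product of squared modulus `1 / Q`.
Tensor the `n`-th vector with the members of the `n`-th of `N` mutually unbiased
`ETF(Q^(J-1), (Q^J-1)/(Q-1))`s. Inside a block the squared moduli are those of the second frame,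
namely `1 / (Q * Q^(J-1))`; across blocks they are `1 / Q` times the unbiased value `1 / Q^(J-1)`.
These agree, so the product family is again an equiangular tight frame.

There are `Q - 1` such mutually unbiased frames, and `N < 2D` says exactly that `N ≤ Q - 1`. They
come from the affine hyperplane of trace one in the field of order `Q^J`: it meets its dilate by
`g` in an affine subspace of codimension two if `g` is outside the ground field, and not at all if
`g ≠ 1` is in it, so it is a difference set relative to the units of the ground field. Hence the
squared modulus of a nontrivial character sum over it depends only on whether the character is
trivial on those units, and the restrictions to the hyperplane of the characters with a common
restriction to the units form one of the frames. -/

section InnerProduct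

open scoped TensorProduct

variable {𝕜 ι κ V W : Type*} [RCLike 𝕜] [Fintype ι] [Fintype κ]
  [NormedAddCommGroup V] [InnerProductSpace 𝕜 V] [NormedAddCommGroup W] [InnerProductSpace 𝕜 W]

theorem nonempty_linearIsometryEquiv_euclideanSpace_fin [FiniteDimensional 𝕜 V] {D : ℕ}
    (hD : Module.finrank 𝕜 V = D) : Nonempty (V ≃ₗᵢ[𝕜] EuclideanSpace 𝕜 (Fin D)) :=
  ⟨((stdOrthonormalBasis 𝕜 V).reindex (finCongr hD)).repr⟩

theorem sum_inner_smul_eq_smul_of_sum_mul_conj [DecidableEq κ] {φ : ι → EuclideanSpace 𝕜 κ} {c : 𝕜}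
    (h : ∀ i j, ∑ n, φ n i * starRingEnd 𝕜 (φ n j) = if i = j then c else 0)
    (y : EuclideanSpace 𝕜 κ) : ∑ n, inner 𝕜 (φ n) y • φ n = c • y := by
  ext i
  calc (∑ n, inner 𝕜 (φ n) y • φ n) i
      = ∑ j, (∑ n, φ n i * starRingEnd 𝕜 (φ n j)) * y j := by
        simp only [WithLp.ofLp_sum, Finset.sum_apply, PiLp.smul_apply, smul_eq_mul,
          PiLp.inner_apply, RCLike.inner_apply, Finset.sum_mul]
        rw [Finset.sum_comm]
        exact Finset.sum_congr rfl fun _ _ => Finset.sum_congr rfl fun _ _ => by ring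
    _ = (c • y) i := by
        simp only [h, ite_mul, zero_mul, Finset.sum_ite_eq, Finset.mem_univ, if_true,
          PiLp.smul_apply, smul_eq_mul]

theorem sum_inner_tmul_smul_tmul {a b : 𝕜} {φ : ι → V} {ψ : ι → κ → W}
    (hφ : ∀ x, ∑ i, inner 𝕜 (φ i) x • φ i = a • x)
    (hψ : ∀ i y, ∑ j, inner 𝕜 (ψ i j) y • ψ i j = b • y) (z : V ⊗[𝕜] W) :
    ∑ p : ι × κ, inner 𝕜 (φ p.1 ⊗ₜ[𝕜] ψ p.1 p.2) z • φ p.1 ⊗ₜ[𝕜] ψ p.1 p.2 = (a * b) • z := by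
  induction z with
  | zero => simp
  | add z w hz hw => simp only [inner_add_right, add_smul, Finset.sum_add_distrib, hz, hw, smul_add]
  | tmul x y =>
    calc ∑ p : ι × κ, inner 𝕜 (φ p.1 ⊗ₜ[𝕜] ψ p.1 p.2) (x ⊗ₜ y) • φ p.1 ⊗ₜ[𝕜] ψ p.1 p.2
        = ∑ i, (inner 𝕜 (φ i) x • φ i) ⊗ₜ[𝕜] ∑ j, inner 𝕜 (ψ i j) y • ψ i j := by
          simp only [Fintype.sum_prod_type, TensorProduct.inner_tmul, TensorProduct.tmul_sum,
            TensorProduct.smul_tmul_smul]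
      _ = (a * b) • x ⊗ₜ[𝕜] y := by
          simp only [hψ]
          rw [← TensorProduct.sum_tmul, hφ, TensorProduct.smul_tmul_smul]

end InnerProduct

section ETF

open scoped TensorProduct

variable {ι κ ι' κ' V W : Type*} [Fintype ι] [Fintype κ] [Fintype ι']
  [NormedAddCommGroup V] [InnerProductSpace ℂ V] [NormedAddCommGroup W] [InnerProductSpace ℂ W]

theorem IsETF.map_reindex {D N : ℕ} {φ : ι → V} (hφ : IsETF D N φ) (U : V ≃ₗᵢ[ℂ] W) (e : ι' ≃ ι) :
    IsETF D N fun i => U (φ (e i)) := by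
  obtain ⟨hnorm, hinner, htight⟩ := hφ
  refine ⟨fun i => by rw [U.norm_map, hnorm], fun i j hij => ?_, fun y => ?_⟩
  · rw [U.inner_map_map, hinner _ _ (e.injective.ne hij)]
  · calc ∑ i, inner ℂ (U (φ (e i))) y • U (φ (e i))
        = U (∑ i, inner ℂ (φ (e i)) (U.symm y) • φ (e i)) := by
          simp only [map_sum, map_smul, U.inner_map_eq_flip]
      _ = U (∑ i, inner ℂ (φ i) (U.symm y) • φ i) := by
          rw [e.sum_comp fun i => inner ℂ (φ i) (U.symm y) • φ i]
      _ = ((N : ℂ) / D) • y := by rw [htight, map_smul, U.apply_symm_apply]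

theorem IsETF.exists_fin [FiniteDimensional ℂ V] {D N : ℕ} {φ : ι → V} (hφ : IsETF D N φ)
    (hι : Fintype.card ι = N) (hV : Module.finrank ℂ V = D) :
    ∃ ψ : Fin N → EuclideanSpace ℂ (Fin D), IsETF D N ψ :=
  have ⟨U⟩ := nonempty_linearIsometryEquiv_euclideanSpace_fin hV
  ⟨_, hφ.map_reindex U (Fintype.equivFinOfCardEq hι).symm⟩

/-- Mutually unbiased equiangular tight frames: a family of `ETF(D,N)`s in which vectors of distinct
members have inner products of squared modulus `1 / D`. -/
structure IsMUETF_s14 (D N : ℕ) (φ : κ' → ι → V) : Prop where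
  isETF : ∀ k, IsETF D N (φ k)
  norm_sq_inner : ∀ k l, k ≠ l → ∀ i j, ‖inner ℂ (φ k i) (φ l j)‖ ^ 2 = 1 / (D : ℝ)

theorem IsMUETF_s14.map_reindex {κ : Type*} {D N : ℕ} {φ : κ → ι → V} (hφ : IsMUETF_s14 D N φ)
    (U : V ≃ₗᵢ[ℂ] W) (f : κ' ↪ κ) (e : ι' ≃ ι) : IsMUETF_s14 D N fun k i => U (φ (f k) (e i)) where
  isETF k := (hφ.isETF (f k)).map_reindex U e
  norm_sq_inner k l hkl i j := by
    rw [U.inner_map_map, hφ.norm_sq_inner _ _ (f.injective.ne hkl)]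

theorem IsETF.tmul_isMUETF {D N D' N' : ℕ} {Q : ℝ} {φ : ι → V} {ψ : ι → κ → W}
    (hφ : IsETF D N φ) (hψ : IsMUETF_s14 D' N' ψ) (hκ : Fintype.card κ = N') (hD : D ≠ 0) (hN : 1 < N)
    (hQ : Q * ((N : ℝ) - D) = D * (N - 1)) (hQ' : Q * ((N' : ℝ) - D') = N' - 1) :
    IsETF (D * D') (N * N') fun p : ι × κ => φ p.1 ⊗ₜ[ℂ] ψ p.1 p.2 := by
  obtain ⟨hnorm, hinner, htight⟩ := hφ
  have hD0 : (D : ℝ) ≠ 0 := Nat.cast_ne_zero.2 hD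
  have hN1 : (N : ℝ) - 1 ≠ 0 := sub_ne_zero.2 (Nat.cast_ne_one.2 hN.ne')
  have hQ0 : Q ≠ 0 := left_ne_zero_of_mul (hQ ▸ mul_ne_zero hD0 hN1)
  have hcoherence : ((N : ℝ) - D) / (D * (N - 1)) = 1 / Q :=
    (div_eq_div_iff (mul_ne_zero hD0 hN1) hQ0).2 (by linear_combination hQ)
  have hcoherence_tmul :
      ((N * N' : ℕ) - (D * D' : ℕ) : ℝ) / ((D * D' : ℕ) * ((N * N' : ℕ) - 1)) = 1 / Q / D' := by
    have hNN' : (N : ℝ) * N' - 1 ≠ 0 := sub_ne_zero.2 <| by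
      exact_mod_cast mt Nat.eq_one_of_mul_eq_one_right hN.ne'
    have hQQ' : ((N : ℝ) * N' - D * D') / (D * (N * N' - 1)) = 1 / Q :=
      (div_eq_div_iff (mul_ne_zero hD0 hNN') hQ0).2
        (by linear_combination (N' : ℝ) * hQ + (D : ℝ) * hQ')
    rw [← hQQ', div_div]
    push_cast
    ring
  refine ⟨fun p => ?_, fun ⟨i, j⟩ ⟨k, l⟩ hpq => ?_, fun z => ?_⟩
  · rw [TensorProduct.norm_tmul, hnorm, (hψ.isETF p.1).1, one_mul]
  · rw [hcoherence_tmul, TensorProduct.inner_tmul, norm_mul, mul_pow]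
    obtain rfl | hik := eq_or_ne i k
    · have hjl : j ≠ l := fun h => hpq (by rw [h])
      have hN' : (N' : ℝ) - 1 ≠ 0 := sub_ne_zero.2 <| Nat.cast_ne_one.2 <|
        hκ ▸ (Fintype.one_lt_card_iff.2 ⟨j, l, hjl⟩).ne'
      have hcoherence' : ((N' : ℝ) - D') / (N' - 1) = 1 / Q :=
        (div_eq_div_iff hN' hQ0).2 (by linear_combination hQ')
      rw [inner_self_eq_norm_sq_to_K, hnorm, (hψ.isETF i).2.1 j l hjl, ← hcoherence']
      simp [div_div, mul_comm]
    · rw [hinner i k hik, hψ.norm_sq_inner i k hik, hcoherence, mul_one_div]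
  · rw [sum_inner_tmul_smul_tmul htight (fun i => (hψ.isETF i).2.2)]
    push_cast
    rw [div_mul_div_comm]

end ETF

section RelativeDifferenceSet

open Finset

section Characters

variable {G : Type*} [CommGroup G]

theorem sum_coe_character_eq_zero {R : Type*} [CommRing R] [IsDomain R] [Fintype G]
    {χ : G →* Rˣ} (hχ : χ ≠ 1) : ∑ g, (χ g : R) = 0 :=
  sum_hom_units_eq_zero ((Units.coeHom R).comp χ) fun h =>
    hχ <| MonoidHom.ext fun g => Units.ext <| DFunLike.congr_fun h g

theorem sum_dual_coe_apply (R : Type*) [CommRing R] [IsDomain R] [Finite G]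
    [HasEnoughRootsOfUnity R (Monoid.exponent G)] [Fintype (G →* Rˣ)] [DecidableEq G] (g : G) :
    ∑ χ : G →* Rˣ, (χ g : R) = if g = 1 then (Nat.card G : R) else 0 := by
  split_ifs with hg
  · simp [hg, ← CommGroup.card_monoidHom_of_hasEnoughRootsOfUnity G R]
  · obtain ⟨χ, hχ⟩ := CommGroup.exists_apply_ne_one_of_hasEnoughRootsOfUnity G R hg
    exact sum_coe_character_eq_zero (χ := MonoidHom.eval g) fun h => hχ (DFunLike.congr_fun h χ)

theorem natCard_dual_quotient [Finite G] (H : Subgroup G) :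
    Nat.card (G ⧸ H →* ℂˣ) = H.index := by
  rw [CommGroup.card_monoidHom_of_hasEnoughRootsOfUnity, H.index_eq_card]

theorem conj_coe_character [Finite G] (χ : G →* ℂˣ) (g : G) :
    starRingEnd ℂ (χ g) = ((χ g)⁻¹ : ℂˣ) := by
  have hnorm : ‖(χ g : ℂ)‖ = 1 :=
    (((Units.coeHom ℂ).comp χ).isOfFinOrder (isOfFinOrder_of_finite g)).norm_eq_one
  rw [Units.val_inv_eq_inv_val, Complex.inv_eq_conj hnorm]

theorem norm_sq_sum_character [Fintype G] [DecidableEq G] (χ : G →* ℂˣ) (D : Finset G) :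
    (‖∑ x ∈ D, (χ x : ℂ)‖ : ℂ) ^ 2 = ∑ g, (#{x ∈ D | g * x ∈ D} : ℂ) * χ g :=
  calc (‖∑ x ∈ D, (χ x : ℂ)‖ : ℂ) ^ 2
      = ∑ x ∈ D, ∑ y, if y ∈ D then (χ (y / x) : ℂ) else 0 := by
        simp only [← Complex.conj_mul', map_sum, conj_coe_character, sum_mul_sum, sum_ite_mem,
          univ_inter, div_eq_inv_mul, map_mul, map_inv, Units.val_mul]
    _ = ∑ x ∈ D, ∑ g, if g * x ∈ D then (χ g : ℂ) else 0 :=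
        sum_congr rfl fun x _ => Fintype.sum_equiv (Equiv.divRight x) _ _ fun y => by simp
    _ = ∑ g, (#{x ∈ D | g * x ∈ D} : ℂ) * χ g := by
        rw [sum_comm]
        simp only [← sum_filter, sum_const, nsmul_eq_mul]

/-- The vector of the harmonic frame of `D` attached to the character `χ`: the restriction of `χ`
to `D`, scaled to be a unit vector. -/
noncomputable def harmonicVector (D : Finset G) (χ : G →* ℂˣ) : EuclideanSpace ℂ D :=
  WithLp.toLp 2 fun x => (√(#D : ℝ) : ℂ)⁻¹ * χ x

variable [Finite G] {D : Finset G}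

theorem inv_sqrt_mul_inv_sqrt_natCast (n : ℕ) :
    (√(n : ℝ) : ℂ)⁻¹ * (√(n : ℝ) : ℂ)⁻¹ = (n : ℂ)⁻¹ := by
  rw [← mul_inv, ← Complex.ofReal_mul, Real.mul_self_sqrt (Nat.cast_nonneg _),
    Complex.ofReal_natCast]

theorem harmonicVector_apply_mul_conj (χ : G →* ℂˣ) (x y : D) :
    harmonicVector D χ x * starRingEnd ℂ (harmonicVector D χ y) = (#D : ℂ)⁻¹ * χ (x / y) := by
  simp only [harmonicVector, map_mul, map_inv₀, Complex.conj_ofReal, conj_coe_character,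
    div_eq_mul_inv, map_inv, Units.val_mul, ← inv_sqrt_mul_inv_sqrt_natCast]
  ring

theorem inner_harmonicVector (χ χ' : G →* ℂˣ) :
    inner ℂ (harmonicVector D χ) (harmonicVector D χ')
      = (#D : ℂ)⁻¹ * ∑ x ∈ D, ((χ' / χ) x : ℂ) := by
  rw [← sum_coe_sort D, mul_sum, PiLp.inner_apply, ← inv_sqrt_mul_inv_sqrt_natCast]
  refine sum_congr rfl fun x _ => ?_
  simp only [harmonicVector, RCLike.inner_apply, map_mul, map_inv₀, Complex.conj_ofReal,
    conj_coe_character, MonoidHom.div_apply, div_eq_mul_inv, Units.val_mul]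
  ring

theorem norm_sq_inner_harmonicVector (χ χ' : G →* ℂˣ) :
    ‖inner ℂ (harmonicVector D χ) (harmonicVector D χ')‖ ^ 2
      = ‖∑ x ∈ D, ((χ' / χ) x : ℂ)‖ ^ 2 / (#D : ℝ) ^ 2 := by
  rw [inner_harmonicVector, norm_mul, norm_inv, Complex.norm_natCast]
  ring

theorem norm_harmonicVector (hD : D.Nonempty) (χ : G →* ℂˣ) : ‖harmonicVector D χ‖ = 1 := by
  have hinner : inner ℂ (harmonicVector D χ) (harmonicVector D χ) = 1 := by
    rw [inner_harmonicVector]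
    simp [hD.ne_empty]
  rw [@norm_eq_sqrt_re_inner ℂ, hinner, RCLike.one_re, Real.sqrt_one]

end Characters

/-- A relative difference set `D` in `G` with forbidden subgroup `H`: each element outside `H` is
a quotient of two elements of `D` in exactly `L` ways, and no nontrivial element of `H` is such a
quotient. A quotient representation `g = y / x` is encoded by its denominator `x`. -/
structure IsRelativeDifferenceSet {G : Type*} [CommGroup G] [DecidableEq G] (H : Subgroup G)
    (D : Finset G) (L : ℕ) : Prop where
  card_filter_mul_mem : ∀ g ∉ H, #{x ∈ D | g * x ∈ D} = L
  mul_notMem : ∀ g ∈ H, g ≠ 1 → ∀ x ∈ D, g * x ∉ D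

namespace IsRelativeDifferenceSet

variable {G : Type*} [CommGroup G] [DecidableEq G] {H : Subgroup G} {D : Finset G} {L : ℕ}

theorem eq_of_div_mem (hD : IsRelativeDifferenceSet H D L) {x y : G} (hx : x ∈ D) (hy : y ∈ D)
    (hxy : y / x ∈ H) : x = y := by
  by_contra hne
  exact hD.mul_notMem _ hxy (div_ne_one.2 (Ne.symm hne)) x hx (by rwa [div_mul_cancel])

theorem norm_sq_sum_character_eq [Fintype G] [DecidablePred (· ∈ H)]
    (hD : IsRelativeDifferenceSet H D L) (χ : G →* ℂˣ) :
    (‖∑ x ∈ D, (χ x : ℂ)‖ : ℂ) ^ 2 = #D + L * (∑ g, (χ g : ℂ) - ∑ h, (χ.domRestrict H h : ℂ)) := by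
  have hcard (g : G) : (#{x ∈ D | g * x ∈ D} : ℂ)
      = (if g = 1 then (#D : ℂ) else 0) + L * (1 - if g ∈ H then 1 else 0) := by
    obtain rfl | hg := eq_or_ne g 1
    · simp
    by_cases hgH : g ∈ H
    · simpa [hg, hgH, filter_eq_empty_iff] using hD.mul_notMem g hgH hg
    · simp [hg, hgH, hD.card_filter_mul_mem g hgH]
  have hH : ∑ h, (χ.domRestrict H h : ℂ) = ∑ g, if g ∈ H then (χ g : ℂ) else 0 := by
    rw [← sum_filter, ← sum_subtype_eq_sum_filter, subtype_univ]
    rfl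
  simp only [norm_sq_sum_character, hcard, hH, add_mul, mul_assoc, sub_mul, ite_mul, one_mul,
    zero_mul, sum_add_distrib, ← mul_sum, sum_sub_distrib, sum_ite_eq', mem_univ, if_true, map_one,
    Units.val_one, mul_one]

theorem norm_sq_sum_character_of_domRestrict_ne_one [Finite G]
    (hD : IsRelativeDifferenceSet H D L) {χ : G →* ℂˣ} (hχ : χ.domRestrict H ≠ 1) :
    ‖∑ x ∈ D, (χ x : ℂ)‖ ^ 2 = #D := by
  classical
  have := Fintype.ofFinite G
  have hχ1 : χ ≠ 1 := fun h => hχ (by rw [h]; rfl)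
  have hsum := hD.norm_sq_sum_character_eq χ
  rw [sum_coe_character_eq_zero hχ1, sum_coe_character_eq_zero hχ, sub_zero, mul_zero,
    add_zero] at hsum
  exact_mod_cast hsum

theorem norm_sq_sum_character_of_domRestrict_eq_one [Finite G]
    (hD : IsRelativeDifferenceSet H D L) {χ : G →* ℂˣ} (hχ : χ ≠ 1) (hχH : χ.domRestrict H = 1) :
    ‖∑ x ∈ D, (χ x : ℂ)‖ ^ 2 = #D - L * (Nat.card H : ℝ) := by
  classical
  have := Fintype.ofFinite G
  have hsum := hD.norm_sq_sum_character_eq χ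
  rw [sum_coe_character_eq_zero hχ, hχH] at hsum
  simp only [MonoidHom.one_apply, Units.val_one, sum_const, card_univ, nsmul_one, zero_sub,
    mul_neg, ← sub_eq_add_neg, ← Nat.card_eq_fintype_card] at hsum
  exact_mod_cast hsum

theorem card_sq [Finite G] (hD : IsRelativeDifferenceSet H D L) :
    (#D : ℝ) ^ 2 = #D + L * Nat.card H * ((H.index : ℝ) - 1) := by
  classical
  have := Fintype.ofFinite G
  have hsum := hD.norm_sq_sum_character_eq 1
  have hG : (Fintype.card G : ℂ) = Nat.card H * H.index := by
    rw [← Nat.card_eq_fintype_card, ← H.card_mul_index, Nat.cast_mul]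
  have hone : (1 : G →* ℂˣ).domRestrict H = 1 := rfl
  simp only [hone, MonoidHom.one_apply, Units.val_one, sum_const, card_univ, nsmul_one, hG,
    ← Nat.card_eq_fintype_card (α := H), RCLike.norm_natCast] at hsum
  have hsum' : (#D : ℝ) ^ 2 = #D + L * (Nat.card H * H.index - Nat.card H) := by
    exact_mod_cast hsum
  linear_combination hsum'

theorem sum_dual_quotient_coe_div [Finite G] [Fintype (G ⧸ H →* ℂˣ)]
    (hD : IsRelativeDifferenceSet H D L) (x y : D) :
    ∑ τ : G ⧸ H →* ℂˣ, (τ (x / y : G) : ℂ) = if x = y then (H.index : ℂ) else 0 := by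
  classical
  have hxy : ((x / y : G) : G ⧸ H) = 1 ↔ x = y := by
    rw [QuotientGroup.eq_one_iff]
    refine ⟨fun h => (Subtype.ext (hD.eq_of_div_mem y.2 x.2 h)).symm, ?_⟩
    rintro rfl
    simp
  simp only [sum_dual_coe_apply, hxy, H.index_eq_card]

theorem card_sub_div_card_sq [Finite G] (hD : IsRelativeDifferenceSet H D L) (hne : D.Nonempty)
    (hH : H.index ≠ 1) :
    (#D - L * (Nat.card H : ℝ)) / (#D : ℝ) ^ 2
      = ((H.index : ℝ) - #D) / (#D * ((H.index : ℝ) - 1)) := by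
  have hD0 : (#D : ℝ) ≠ 0 := Nat.cast_ne_zero.2 hne.card_pos.ne'
  have hH1 : (H.index : ℝ) - 1 ≠ 0 := sub_ne_zero.2 (Nat.cast_ne_one.2 hH)
  rw [div_eq_div_iff (pow_ne_zero 2 hD0) (mul_ne_zero hD0 hH1)]
  linear_combination (#D : ℝ) * hD.card_sq

theorem isETF_harmonicVector [Finite G] [Fintype (G ⧸ H →* ℂˣ)]
    (hD : IsRelativeDifferenceSet H D L) (hne : D.Nonempty) (χ : G →* ℂˣ) :
    IsETF #D H.index fun τ : G ⧸ H →* ℂˣ =>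
      harmonicVector D (χ * τ.comp (QuotientGroup.mk' H)) := by
  refine ⟨fun τ => norm_harmonicVector hne _, fun τ τ' hτ => ?_, ?_⟩
  · have hindex : H.index ≠ 1 := by
      rw [← natCard_dual_quotient, Nat.card_eq_fintype_card]
      exact (Fintype.one_lt_card_iff.2 ⟨τ, τ', hτ⟩).ne'
    have hdiv : χ * τ'.comp (QuotientGroup.mk' H) / (χ * τ.comp (QuotientGroup.mk' H))
        = (τ' / τ).comp (QuotientGroup.mk' H) := by
      ext g
      simp
    rw [norm_sq_inner_harmonicVector, hdiv, hD.norm_sq_sum_character_of_domRestrict_eq_one,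
      hD.card_sub_div_card_sq hne hindex]
    · rw [← MonoidHom.one_comp (QuotientGroup.mk' H), Ne,
        MonoidHom.cancel_right (QuotientGroup.mk'_surjective H)]
      exact div_ne_one.2 hτ.symm
    · ext h
      simp [(QuotientGroup.eq_one_iff _).2 h.2]
  · refine sum_inner_smul_eq_smul_of_sum_mul_conj fun x y => ?_
    simp only [harmonicVector_apply_mul_conj, MonoidHom.mul_apply, MonoidHom.comp_apply,
      QuotientGroup.mk'_apply, Units.val_mul, ← mul_sum, hD.sum_dual_quotient_coe_div x y]
    split_ifs with hxy
    · simp [hxy, div_eq_inv_mul]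
    · simp

theorem isMUETF_harmonicVector [Finite G] [Fintype (G ⧸ H →* ℂˣ)]
    (hD : IsRelativeDifferenceSet H D L) (hne : D.Nonempty) {κ : Type*} {θ : κ → G →* ℂˣ}
    (hθ : Function.Injective fun k => (θ k).domRestrict H) :
    IsMUETF_s14 #D H.index fun k (τ : G ⧸ H →* ℂˣ) =>
      harmonicVector D (θ k * τ.comp (QuotientGroup.mk' H)) where
  isETF k := hD.isETF_harmonicVector hne (θ k)
  norm_sq_inner k l hkl τ τ' := by
    have hD0 : (#D : ℝ) ≠ 0 := Nat.cast_ne_zero.2 hne.card_pos.ne'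
    rw [norm_sq_inner_harmonicVector, hD.norm_sq_sum_character_of_domRestrict_ne_one]
    · field_simp
    · intro h
      refine hθ.ne hkl.symm (MonoidHom.ext fun x => div_eq_one.1 ?_)
      simpa [(QuotientGroup.eq_one_iff _).2 x.2] using DFunLike.congr_fun h x

theorem exists_isMUETF [Finite G] (hD : IsRelativeDifferenceSet H D L) (hne : D.Nonempty) :
    ∃ ψ : Fin (Nat.card H) → Fin H.index → EuclideanSpace ℂ (Fin #D),
      IsMUETF_s14 #D H.index ψ := by
  have := Fintype.ofFinite (G ⧸ H →* ℂˣ)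
  have hκ : Nat.card (H →* ℂˣ) = Nat.card H :=
    CommGroup.card_monoidHom_of_hasEnoughRootsOfUnity H ℂ
  have hext := MonoidHom.domRestrict_surjective ℂ H
  have hθ : Function.Injective fun ξ : H →* ℂˣ => (Function.surjInv hext ξ).domRestrict H :=
    Function.LeftInverse.injective (g := id) (Function.surjInv_eq hext)
  obtain ⟨U⟩ := nonempty_linearIsometryEquiv_euclideanSpace_fin
    (𝕜 := ℂ) (V := EuclideanSpace ℂ D) (D := #D) (by simp)
  exact ⟨_, (hD.isMUETF_harmonicVector hne hθ).map_reindex U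
    (Finite.equivFinOfCardEq hκ).symm.toEmbedding
    (Finite.equivFinOfCardEq (natCard_dual_quotient H)).symm⟩

end IsRelativeDifferenceSet

section Hyperplane

theorem card_filter_eq_mul_card_of_surjective {A B : Type*} [AddGroup A] [AddGroup B] [Fintype A]
    [Fintype B] [DecidableEq B] {f : A →+ B} (hf : Function.Surjective f) (b : B) :
    #{a | f a = b} * Fintype.card B = Fintype.card A :=
  calc #{a | f a = b} * Fintype.card B = ∑ c, #{a | f a = c} := by
        simp [fun c => AddMonoidHom.card_fiber_eq_of_mem_range f (hf c) (hf b), mul_comm]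
    _ = Fintype.card A := (card_eq_sum_card_fiberwise fun _ _ => mem_univ _).symm

theorem surjective_prod_of_notMem_span {K V : Type*} [Field K] [AddCommGroup V] [Module K V]
    {f g : Module.Dual K V} (hf : f ≠ 0) (hg : g ∉ K ∙ f) : Function.Surjective (f.prod g) := by
  obtain ⟨u, hfu, hgu⟩ : ∃ u, f u = 0 ∧ g u ≠ 0 := by
    by_contra! hker
    refine hg ?_
    simpa using mem_span_of_iInf_ker_le_ker (L := fun _ : Unit => f) (K := g)
      (by simpa [SetLike.le_def] using hker)
  rintro ⟨a, b⟩
  obtain ⟨v, rfl⟩ := f.surjective hf a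
  exact ⟨v + ((b - g v) / g u) • u, by simp [hfu, hgu]⟩

theorem card_filter_units {E : Type*} [GroupWithZero E] [Fintype E] [DecidableEq E] {p : E → Prop}
    [DecidablePred p] (hp : ¬ p 0) : #{x : Eˣ | p x} = #{x | p x} :=
  card_nbij (↑) (by simp [Set.MapsTo]) Units.val_injective.injOn fun x hx => by
    have hpx : p x := by simpa using hx
    have hx0 : x ≠ 0 := by
      rintro rfl
      exact hp hpx
    exact ⟨Units.mk0 x hx0, by simpa⟩

variable {F E : Type*} [Field F] [Field E] [Algebra F E]

theorem mem_range_algebraMap_of_comp_mul_mem_span {ℓ : Module.Dual F E} (hℓ : ℓ ≠ 0) {g : E}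
    (hg : ℓ ∘ₗ LinearMap.mulLeft F g ∈ F ∙ ℓ) : g ∈ (algebraMap F E).range := by
  obtain ⟨c, hc⟩ := Submodule.mem_span_singleton.1 hg
  refine ⟨c, ?_⟩
  by_contra hne
  refine hℓ (LinearMap.ext fun y => ?_)
  have hgc := sub_ne_zero.2 (Ne.symm hne)
  have hcy := DFunLike.congr_fun hc ((g - algebraMap F E c)⁻¹ * y)
  have hsub : ℓ ((g - algebraMap F E c) * ((g - algebraMap F E c)⁻¹ * y)) = 0 := by
    rw [sub_mul, map_sub, ← Algebra.smul_def, map_smul, sub_eq_zero]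
    exact hcy.symm
  rwa [mul_inv_cancel_left₀ hgc] at hsub

/-- The affine hyperplane `ℓ x = 1`, as a subset of the multiplicative group of `E`. -/
def unitHyperplane [Fintype E] [DecidableEq E] [DecidableEq F] (ℓ : Module.Dual F E) : Finset Eˣ :=
  {x | ℓ x = 1}

theorem card_unitHyperplane_mul_card [Fintype E] [DecidableEq E] [Fintype F] [DecidableEq F]
    {ℓ : Module.Dual F E} (hℓ : ℓ ≠ 0) :
    #(unitHyperplane ℓ) * Fintype.card F = Fintype.card E := by
  rw [unitHyperplane, card_filter_units (p := fun x => ℓ x = 1) (by simp)]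
  exact card_filter_eq_mul_card_of_surjective (f := ℓ.toAddMonoidHom) (ℓ.surjective hℓ) 1

variable (F E) in
/-- The multiplicative group of the ground field `F`, as a subgroup of that of `E`. -/
def groundUnits : Subgroup Eˣ :=
  (Units.map (algebraMap F E : F →* E)).range

theorem natCard_groundUnits [Finite F] : Nat.card (groundUnits F E) = Nat.card F - 1 := by
  rw [← Nat.card_units]
  exact (Nat.card_congr
    (MonoidHom.ofInjective (Units.map_injective (algebraMap F E).injective)).toEquiv).symm

theorem isRelativeDifferenceSet_unitHyperplane [Fintype E] [DecidableEq E] [Fintype F]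
    [DecidableEq F] {ℓ : Module.Dual F E} (hℓ : ℓ ≠ 0) :
    IsRelativeDifferenceSet (groundUnits F E) (unitHyperplane ℓ)
      (Fintype.card E / Fintype.card F ^ 2) where
  card_filter_mul_mem g hg := by
    have hnotMem : ℓ ∘ₗ LinearMap.mulLeft F (g : E) ∉ F ∙ ℓ := by
      intro hmem
      obtain ⟨c, hc⟩ := mem_range_algebraMap_of_comp_mul_mem_span hℓ hmem
      have hc0 : c ≠ 0 := by
        rintro rfl
        exact g.ne_zero (by rw [← hc, map_zero])
      exact hg ⟨Units.mk0 c hc0, Units.ext hc⟩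
    have hsurj := surjective_prod_of_notMem_span hℓ hnotMem
    have hfiber := card_filter_eq_mul_card_of_surjective
      (f := (ℓ.prod (ℓ ∘ₗ LinearMap.mulLeft F (g : E))).toAddMonoidHom) hsurj (1, 1)
    refine (Nat.div_eq_of_eq_mul_left (pow_pos Fintype.card_pos 2) ?_).symm
    rw [← hfiber, Fintype.card_prod, ← sq, unitHyperplane, filter_filter]
    congr 1
    simpa using (card_filter_units (E := E) (p := fun x => ℓ x = 1 ∧ ℓ (g * x) = 1) (by simp)).symm
  mul_notMem := by
    rintro _ ⟨c, rfl⟩ hc x hx hcx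
    have hℓx : ℓ x = 1 := by simpa [unitHyperplane] using hx
    have hℓcx : (c : F) * ℓ x = 1 := by simpa [unitHyperplane, ← Algebra.smul_def] using hcx
    rw [hℓx, mul_one, Units.val_eq_one] at hℓcx
    exact hc (by rw [hℓcx, map_one])

theorem exists_isMUETF_of_natCard_eq_pow (F E : Type*) [Field F] [Field E] [Algebra F E]
    [Finite E] {q n : ℕ} (hF : Nat.card F = q) (hE : Nat.card E = q ^ (n + 1)) :
    ∃ ψ : Fin (q - 1) → Fin ((q ^ (n + 1) - 1) / (q - 1)) → EuclideanSpace ℂ (Fin (q ^ n)),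
      IsMUETF_s14 (q ^ n) ((q ^ (n + 1) - 1) / (q - 1)) ψ := by
  classical
  have := Fintype.ofFinite E
  have := Finite.of_injective _ (algebraMap F E).injective
  have := Fintype.ofFinite F
  have hq : 1 < q := hF ▸ Finite.one_lt_card
  have hℓ : Algebra.trace F E ≠ 0 := Algebra.trace_ne_zero F E
  have hD : #(unitHyperplane (Algebra.trace F E)) = q ^ n := by
    have hcard := card_unitHyperplane_mul_card hℓ
    rw [← Nat.card_eq_fintype_card, ← Nat.card_eq_fintype_card, hF, hE, pow_succ] at hcard
    exact Nat.eq_of_mul_eq_mul_right (by lia) hcard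
  have hH : Nat.card (groundUnits F E) = q - 1 := by rw [natCard_groundUnits, hF]
  have hindex : (groundUnits F E).index = (q ^ (n + 1) - 1) / (q - 1) := by
    rw [← hE, ← Nat.card_units, ← (groundUnits F E).card_mul_index, hH,
      Nat.mul_div_cancel_left _ (by lia)]
  have hne : (unitHyperplane (Algebra.trace F E)).Nonempty := by
    rw [← card_pos, hD]
    positivity
  have hψ := (isRelativeDifferenceSet_unitHyperplane hℓ).exists_isMUETF hne
  rwa [hD, hH, hindex] at hψ

theorem exists_isMUETF_of_isPrimePow {q : ℕ} (hq : IsPrimePow q) (n : ℕ) :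
    ∃ ψ : Fin (q - 1) → Fin ((q ^ (n + 1) - 1) / (q - 1)) → EuclideanSpace ℂ (Fin (q ^ n)),
      IsMUETF_s14 (q ^ n) ((q ^ (n + 1) - 1) / (q - 1)) ψ := by
  obtain ⟨p, k, hp, hk, rfl⟩ := (isPrimePow_nat_iff _).1 hq
  have := Fact.mk hp
  have hF := GaloisField.card p k hk.ne'
  exact exists_isMUETF_of_natCard_eq_pow (GaloisField p k)
    (FiniteField.Extension (GaloisField p k) p (n + 1)) hF
    (by rw [FiniteField.natCard_extension, hF])

end Hyperplane

end RelativeDifferenceSet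

section Parameters

theorem le_pred_of_mul_sub_eq {D N Q : ℕ} (hDN : D < N) (hN : N < 2 * D)
    (hQ : Q * (N - D) = D * (N - 1)) : N ≤ Q - 1 := by
  have hle : (N + 1) * (N - D) ≤ Q * (N - D) := by
    rw [hQ]
    zify [hDN.le, (Nat.zero_le D).trans_lt hDN]
    nlinarith
  have := Nat.le_of_mul_le_mul_right hle (Nat.sub_pos_of_lt hDN)
  lia

theorem mul_geom_sub_pow_eq {q : ℕ} (hq : 2 ≤ q) (n : ℕ) :
    (q : ℝ) * (((q ^ (n + 1) - 1) / (q - 1) : ℕ) - (q ^ n : ℕ))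
      = ((q ^ (n + 1) - 1) / (q - 1) : ℕ) - 1 := by
  rw [← Nat.geomSum_eq hq]
  push_cast
  linear_combination (q : ℝ) * Finset.sum_range_succ (fun i => (q : ℝ) ^ i) n
    - geom_sum_succ (x := (q : ℝ)) (n := n)

end Parameters

/-- if `D < N < 2D`, `N−D` divides `D(N−1)`, `Q = D(N−1)/(N−D)` is a
prime power, and an `ETF(D,N)` exists in `ℂ^D`, then for every `J ≥ 1` there exists an
`ETF(D·Q^{J−1}, N·(Q^J−1)/(Q−1))` in `ℂ^{D·Q^{J−1}}`. -/
theorem stmt14 (D N : ℕ) (h1 : D < N) (h2 : N < 2 * D)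
    (hdvd : (N - D) ∣ D * (N - 1))
    (Q : ℕ) (hQ : Q = D * (N - 1) / (N - D)) (hpp : IsPrimePow Q)
    (hexists : ∃ φ : Fin N → EuclideanSpace ℂ (Fin D), IsETF D N φ) :
    ∀ J : ℕ, 1 ≤ J →
      ∃ ψ : Fin (N * ((Q ^ J - 1) / (Q - 1))) →
          EuclideanSpace ℂ (Fin (D * Q ^ (J - 1))),
        IsETF (D * Q ^ (J - 1)) (N * ((Q ^ J - 1) / (Q - 1))) ψ := by
  rintro (_ | n) hn
  · simp at hn
  obtain ⟨φ, hφ⟩ := hexists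
  obtain ⟨ψ, hψ⟩ := exists_isMUETF_of_isPrimePow hpp n
  have hQN : Q * (N - D) = D * (N - 1) := by rw [hQ, Nat.div_mul_cancel hdvd]
  have hQN' : (Q : ℝ) * (N - D) = D * (N - 1) := by
    rw [← Nat.cast_pred (by lia), ← Nat.cast_sub h1.le]
    exact_mod_cast hQN
  have hψN := hψ.map_reindex (.refl ℂ _)
    (Fin.castLEEmb (le_pred_of_mul_sub_eq h1 h2 hQN)) (Equiv.refl _)
  exact (hφ.tmul_isMUETF hψN (Fintype.card_fin _) (by lia) (by lia) hQN'
    (mul_geom_sub_pow_eq hpp.two_le n)).exists_fin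
    (by simp) (by rw [Module.finrank_tensorProduct]; simp)
end
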